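/- Claim (Gaussian-weighted L² bound for the heat kernel): Let (Γ, π, μ) be a weighted graph with controlled and uniformly lazy weights admitting a relative Faber-Krahn function of the form Λ(B(z,r), ν) = (a/r²)(F(z,r)/ν)^α for some positive function F and constants a, α > 0. For D > 0 define E_D(k, x) = ∑_{w ∈ Γ} p(k, x, w)² exp(ρ(x,w)²/(Dk)) π(w), where ρ(x,w) = max{1, d(x,w)}. Then there exist D₀ > 0 and, for each D ≥ D₀, a constant C(D) such that E_D(k, x) ≤ C(D)/F(x, √(2k)) for all x ∈ Γ and all integers k ≥ 1. -/

import Mathlib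

open scoped BigOperators

/-- Sum of a real-valued function over a set of vertices. -/
noncomputable def setSum {V : Type*} (A : Set V) (f : V → ℝ) : ℝ := ∑' y : A, f (y : V)

open Classical in
/-- The Markov kernel attached to vertex weights `pw` and edge weights `ew`. -/
noncomputable def mkernel {V : Type*} (pw : V → ℝ) (ew : V → V → ℝ) (x y : V) : ℝ :=
  if x = y then 1 - (∑' z, ew x z) / pw x else ew x y / pw x

open Classical in
/-- Iterates (convolution powers) of the Markov kernel. -/
noncomputable def mkernelPow {V : Type*} (pw : V → ℝ) (ew : V → V → ℝ) : ℕ → V → V → ℝ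
  | 0 => fun x y => if x = y then 1 else 0
  | n + 1 => fun x y => ∑' z, mkernel pw ew x z * mkernelPow pw ew n z y

/-- The heat kernel (transition density) of the random walk. -/
noncomputable def mheat {V : Type*} (pw : V → ℝ) (ew : V → V → ℝ) (n : ℕ) (x y : V) : ℝ :=
  mkernelPow pw ew n x y / pw y

/-- A weighted graph: a simple connected graph with symmetric, adapted edge weights
subordinate to positive vertex weights. -/
structure WeightedGraph (V : Type*) where
  G : SimpleGraph V
  wV : V → ℝ
  wE : V → V → ℝ
  wV_pos : ∀ x, 0 < wV x
  wE_nonneg : ∀ x y, 0 ≤ wE x y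
  wE_symm : ∀ x y, wE x y = wE y x
  adapted : ∀ x y, 0 < wE x y ↔ G.Adj x y
  connected : G.Connected
  wE_summable : ∀ x, Summable fun y => wE x y
  subordinate : ∀ x, (∑' y, wE x y) ≤ wV x

namespace WeightedGraph

variable {V : Type*}

/-- Controlled weights with constant `Cc`. -/
def Controlled (Γ : WeightedGraph V) (Cc : ℝ) : Prop :=
  1 < Cc ∧ ∀ x y, Γ.G.Adj x y → Γ.wV x ≤ Cc * Γ.wE x y

/-- Uniformly lazy weights with constant `Ce`. -/
def UniformlyLazy (Γ : WeightedGraph V) (Ce : ℝ) : Prop :=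
  Ce ∈ Set.Ioo (0 : ℝ) 1 ∧ ∀ x, (∑' y, Γ.wE x y) ≤ (1 - Ce) * Γ.wV x

/-- Closed ball for the graph distance. -/
noncomputable def ball (Γ : WeightedGraph V) (x : V) (r : ℝ) : Set V :=
  {y | (Γ.G.dist x y : ℝ) ≤ r}

/-- Volume of a ball. -/
noncomputable def vol (Γ : WeightedGraph V) (x : V) (r : ℝ) : ℝ :=
  setSum (Γ.ball x r) Γ.wV

/-- Dirichlet energy of a function. -/
noncomputable def energy (Γ : WeightedGraph V) (f : V → ℝ) : ℝ :=
  (∑' x, ∑' y, (f x - f y) ^ 2 * Γ.wE x y) / 2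

/-- Squared `L²`-norm of a function. -/
noncomputable def sqnorm (Γ : WeightedGraph V) (f : V → ℝ) : ℝ :=
  ∑' x, f x ^ 2 * Γ.wV x

/-- The first Dirichlet eigenvalue of a finite set `Ω`. -/
noncomputable def lambda1 (Γ : WeightedGraph V) (Ω : Finset V) : ℝ :=
  sInf {q | ∃ f : V → ℝ, f ≠ 0 ∧ (∀ x, f x ≠ 0 → x ∈ Ω) ∧ q = Γ.energy f / Γ.sqnorm f}

/-- `Λ` is a relative Faber-Krahn function of `Γ`: for balls `B(z,r)` the map
`ν ↦ Λ z r ν` is non-increasing, and `λ₁(Ω) ≥ Λ(B, π(Ω))` for nonempty finite `Ω ⊆ B`. -/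
def IsRelFK (Γ : WeightedGraph V) (Λ : V → ℝ → ℝ → ℝ) : Prop :=
  (∀ z r ν₁ ν₂, 0 < ν₁ → ν₁ ≤ ν₂ → Λ z r ν₂ ≤ Λ z r ν₁) ∧
  ∀ z : V, ∀ r : ℝ, ∀ Ω : Finset V, Ω.Nonempty → (∀ x ∈ Ω, x ∈ Γ.ball z r) →
    Λ z r (∑ x ∈ Ω, Γ.wV x) ≤ Γ.lambda1 Ω

/-- The heat kernel of the weighted graph. -/
noncomputable def heatKernel (Γ : WeightedGraph V) : ℕ → V → V → ℝ :=
  mheat Γ.wV Γ.wE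

/-- `ε`-average of a function over closed balls of radius `ε`. -/
noncomputable def avg (Γ : WeightedGraph V) (ε : ℝ) (f : V → ℝ) (x : V) : ℝ :=
  setSum (Γ.ball x ε) (fun y => f y * Γ.wV y) / Γ.vol x ε

/-- `Φ` is a quasi-isometry between weighted graphs with constants `ε, a, b, Cq`. -/
structure IsQI {V₁ V₂ : Type*} (Γ₁ : WeightedGraph V₁) (Γ₂ : WeightedGraph V₂)
    (Φ : V₁ → V₂) (ε a b Cq : ℝ) : Prop where
  eps_pos : 0 < ε
  a_pos : 0 < a
  b_nonneg : 0 ≤ b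
  Cq_pos : 0 < Cq
  dense : ∀ z : V₂, ∃ x : V₁, (Γ₂.G.dist (Φ x) z : ℝ) ≤ ε
  dist_lower : ∀ x y : V₁, a⁻¹ * (Γ₁.G.dist x y : ℝ) - b ≤ (Γ₂.G.dist (Φ x) (Φ y) : ℝ)
  dist_upper : ∀ x y : V₁, (Γ₂.G.dist (Φ x) (Φ y) : ℝ) ≤ a * (Γ₁.G.dist x y : ℝ)
  weight_lower : ∀ x, Cq⁻¹ * Γ₁.wV x ≤ Γ₂.wV (Φ x)
  weight_upper : ∀ x, Γ₂.wV (Φ x) ≤ Cq * Γ₁.wV x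

end WeightedGraph

/-!
For fixed `x` and `k` put `v₀ = p(k, x, ·) exp (ρ(x, ·)² / (D k))` and `vₛ = Kˢ v₀`, so that
`v_k(x)` is the energy `E = E_D(k, x)` itself. By the integrated maximum principle the norm of `vₛ`
in `L²` with weight `exp (-2 ρ(x, ·)² / (D (2k - s)))` does not increase with `s`; at `s = 0` its
square is `E`. On the ball of radius `√(2k)` about `x` the weight is at least `exp (-4 / D)`, hence
`∑ vₛ² π ≤ exp (4 / D) E` there for all `s ≤ k`. De Giorgi's iteration turns the Faber-Krahn
inequality into the mean value inequality `v_k(x)² ≤ C / F(x, √(2k)) * sup_s ∑ vₛ² π`, that is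
`E² ≤ C exp (4 / D) E / F(x, √(2k))`, and it remains to divide by `E`. This needs `E` to be finite,
so the argument is run for the walk killed outside a finite set, which then exhausts the graph.
-/

open Filter Matrix Topology

theorem le_div_add_div_of_affine_recursion {J : ℕ → ℝ} {l c : ℝ} {n : ℕ} (hn : 0 < n)
    (hl : 0 < l) (hl1 : l ≤ 1) (hJ : 0 ≤ J 0)
    (hstep : ∀ i < n, J (i + 1) ≤ (1 - l) * J i + c) (hc : 0 ≤ c) :
    J n ≤ J 0 / (l * n) + c / l := by
  have geometric : ∀ i ≤ n, J i ≤ (1 - l) ^ i * J 0 + c / l := by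
    intro i
    induction i with
    | zero => intro; simpa using div_nonneg hc hl.le
    | succ i ih =>
      intro hi
      calc J (i + 1) ≤ (1 - l) * J i + c := hstep i hi
        _ ≤ (1 - l) * ((1 - l) ^ i * J 0 + c / l) + c := by
            have := ih (by lia)
            gcongr
        _ = (1 - l) ^ (i + 1) * J 0 + c / l := by field_simp; ring
  have power_le : (1 - l) ^ n ≤ (l * n)⁻¹ := by
    calc (1 - l) ^ n ≤ Real.exp (-l) ^ n :=
          pow_le_pow_left₀ (by linarith) (Real.one_sub_le_exp_neg l) n
      _ = (Real.exp (l * n))⁻¹ := by rw [← Real.exp_nat_mul, ← Real.exp_neg]; congr 1; ring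
      _ ≤ (l * n)⁻¹ := by
          gcongr
          linarith [Real.add_one_le_exp (l * n)]
  calc J n ≤ (1 - l) ^ n * J 0 + c / l := geometric n le_rfl
    _ ≤ (l * n)⁻¹ * J 0 + c / l := by gcongr
    _ = J 0 / (l * n) + c / l := by ring

theorem neg_sq_mul_sub_mul_le {ε : ℝ} (hε : 0 < ε) (a b : ℝ) {g h : ℝ} (hg : 0 < g) (hh : 0 < h) :
    -(ε * (a - b) ^ 2 * ((g + h) / 2) + (a ^ 2 - b ^ 2) * (g - h) / 2)
      ≤ (a ^ 2 + b ^ 2) * ((g - h) ^ 2 / (g + h) / (4 * ε)) := by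
  have complete_square : (a ^ 2 + b ^ 2) * ((g - h) ^ 2 / (g + h) / (4 * ε))
      + (ε * (a - b) ^ 2 * ((g + h) / 2) + (a ^ 2 - b ^ 2) * (g - h) / 2)
      = ((2 * ε * (a - b) * (g + h) + (a + b) * (g - h)) ^ 2 + ((a - b) * (g - h)) ^ 2)
        / (8 * ε * (g + h)) := by
    field_simp
    ring
  have : 0 ≤ ((2 * ε * (a - b) * (g + h) + (a + b) * (g - h)) ^ 2 + ((a - b) * (g - h)) ^ 2)
      / (8 * ε * (g + h)) := by positivity
  linarith

theorem neg_sq_mul_sub_mul_sq_le {ε : ℝ} (hε : 0 < ε) (hε1 : ε < 1) (a b g h : ℝ) :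
    -(ε * (a - b) ^ 2 * ((g ^ 2 + h ^ 2) / 2) + (a ^ 2 - b ^ 2) * (g ^ 2 - h ^ 2) / 2)
      ≤ (a ^ 2 + b ^ 2) * (2 / ε * (g - h) ^ 2) - ε / 4 * (a * g - b * h) ^ 2 := by
  set X := (a - b) * ((g + h) / 2) with hX
  set Y := (a + b) * (g - h) with hY
  set Z := (a - b) * (g - h) with hZ
  have complete_square : (a ^ 2 + b ^ 2) * (2 / ε * (g - h) ^ 2) - ε / 4 * (a * g - b * h) ^ 2
      + (ε * (a - b) ^ 2 * ((g ^ 2 + h ^ 2) / 2) + (a ^ 2 - b ^ 2) * (g ^ 2 - h ^ 2) / 2)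
      = ((4 - ε) / 8 * (ε * X + Y) ^ 2 + (2 + ε) / 8 * (ε * X) ^ 2
        + (8 + 2 * ε - ε ^ 2) / 16 * Y ^ 2 + (1 + ε ^ 2 / 4) * Z ^ 2) / ε := by
    rw [hX, hY, hZ]
    field_simp
    ring
  have h₁ : 0 ≤ 4 - ε := by linarith
  have h₂ : 0 ≤ 8 + 2 * ε - ε ^ 2 := by nlinarith
  have : 0 ≤ ((4 - ε) / 8 * (ε * X + Y) ^ 2 + (2 + ε) / 8 * (ε * X) ^ 2
      + (8 + 2 * ε - ε ^ 2) / 16 * Y ^ 2 + (1 + ε ^ 2 / 4) * Z ^ 2) / ε := by positivity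
  linarith

/-- The piecewise linear cutoff equal to `1` on `(-∞, R]` and to `0` on `[R + δ, ∞)`. -/
noncomputable def cutoff (R δ t : ℝ) : ℝ := max 0 (min 1 ((R + δ - t) / δ))

section Cutoff

variable {R δ : ℝ}

theorem cutoff_nonneg (t : ℝ) : 0 ≤ cutoff R δ t := le_max_left _ _

theorem cutoff_le_one (t : ℝ) : cutoff R δ t ≤ 1 := max_le zero_le_one (min_le_left _ _)

theorem cutoff_eq_one (hδ : 0 < δ) {t : ℝ} (ht : t ≤ R) : cutoff R δ t = 1 := by
  have : 1 ≤ (R + δ - t) / δ := by rw [one_le_div hδ]; linarith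
  rw [cutoff, min_eq_left this, max_eq_right zero_le_one]

theorem cutoff_eq_zero (hδ : 0 < δ) {t : ℝ} (ht : R + δ ≤ t) : cutoff R δ t = 0 :=
  max_eq_left ((min_le_right _ _).trans (div_nonpos_of_nonpos_of_nonneg (by linarith) hδ.le))

theorem abs_cutoff_sub_le (hδ : 0 < δ) (s t : ℝ) :
    |cutoff R δ s - cutoff R δ t| ≤ |s - t| / δ := by
  calc |cutoff R δ s - cutoff R δ t|
      ≤ |min 1 ((R + δ - s) / δ) - min 1 ((R + δ - t) / δ)| := by
        simpa [cutoff] using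
          abs_max_sub_max_le_max 0 (min 1 ((R + δ - s) / δ)) 0 (min 1 ((R + δ - t) / δ))
    _ ≤ |(R + δ - s) / δ - (R + δ - t) / δ| := by
        simpa using abs_min_sub_min_le_max 1 ((R + δ - s) / δ) 1 ((R + δ - t) / δ)
    _ = |s - t| / δ := by
        rw [← sub_div, abs_div, abs_of_pos hδ, sub_sub_sub_cancel_left, abs_sub_comm]

/-- The part of `u` above the level `t`, cut off outside the ball `{d ≤ R + δ}`: the test
function of De Giorgi's argument. -/
noncomputable def truncation {ι : Type*} (d u : ι → ℝ) (R δ t : ℝ) : ι → ℝ :=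
  (fun x => (u x - t)⁺) * fun x => cutoff R δ (d x)

variable {ι : Type*} {d u : ι → ℝ} {x : ι}

theorem le_of_truncation_ne_zero {t : ℝ} (hδ : 0 < δ) (hx : truncation d u R δ t x ≠ 0) :
    d x ≤ R + δ := by
  contrapose! hx
  rw [truncation, Pi.mul_apply, cutoff_eq_zero hδ hx.le, mul_zero]

theorem lt_of_truncation_ne_zero {t : ℝ} (hx : truncation d u R δ t x ≠ 0) : t < u x := by
  contrapose! hx
  rw [truncation, Pi.mul_apply, posPart_eq_zero.2 (sub_nonpos.2 hx), zero_mul]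

end Cutoff

section Gaussian

variable {D T a b ε : ℝ}

/-- The Gaussian weight at distance `a` and time `T`. -/
noncomputable def gaussianWeight (D T a : ℝ) : ℝ := Real.exp (-(a ^ 2 / (D * T)))

theorem gaussianWeight_pos (D T a : ℝ) : 0 < gaussianWeight D T a := Real.exp_pos _

theorem sq_gaussianWeight_sub_div_add_le (hD : 6 ≤ D) (hT : 1 ≤ T) (ha : 1 ≤ a) (haT : a ≤ 2 * T)
    (hab : |a - b| ≤ 1) :
    (gaussianWeight D T a - gaussianWeight D T b) ^ 2
        / (gaussianWeight D T a + gaussianWeight D T b)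
      ≤ (6 * a / (D * T)) ^ 2 * gaussianWeight D T a := by
  have hX := gaussianWeight_pos D T a
  set X := gaussianWeight D T a with hXdef
  set z := (a ^ 2 - b ^ 2) / (D * T) with hz
  have hDT : 0 < D * T := by positivity
  have ratio : gaussianWeight D T b = X * Real.exp z := by
    rw [hXdef, gaussianWeight, gaussianWeight, ← Real.exp_add, hz]
    congr 1
    ring
  have abs_z_le : |z| ≤ 3 * a / (D * T) := by
    rw [hz, abs_div, abs_of_pos hDT]
    gcongr
    rw [abs_le] at hab ⊢
    constructor <;> nlinarith
  have abs_z_le_one : |z| ≤ 1 := by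
    refine abs_z_le.trans ((div_le_one hDT).2 ?_)
    nlinarith
  have exp_sub_one_le : |Real.exp z - 1| ≤ 6 * a / (D * T) :=
    calc |Real.exp z - 1| ≤ 2 * |z| := Real.abs_exp_sub_one_le abs_z_le_one
      _ ≤ 2 * (3 * a / (D * T)) := by gcongr
      _ = 6 * a / (D * T) := by ring
  calc (X - gaussianWeight D T b) ^ 2 / (X + gaussianWeight D T b)
      ≤ (X - gaussianWeight D T b) ^ 2 / X := by
        gcongr
        exact le_add_of_nonneg_right (gaussianWeight_pos D T b).le
    _ = |Real.exp z - 1| ^ 2 * X := by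
        rw [ratio, sq_abs]
        field_simp
        ring
    _ ≤ (6 * a / (D * T)) ^ 2 * X := by gcongr

theorem one_add_mul_gaussianWeight_le (hD : 0 < D) (hT : 1 ≤ T) :
    (1 + a ^ 2 / (2 * D * T ^ 2)) * gaussianWeight D T a ≤ gaussianWeight D (T + 1) a := by
  have exponent_le : a ^ 2 / (2 * D * T ^ 2) ≤ a ^ 2 / (D * T) - a ^ 2 / (D * (T + 1)) :=
    calc a ^ 2 / (2 * D * T ^ 2) ≤ a ^ 2 / (D * (T * (T + 1))) := by
          have : D * (T * (T + 1)) ≤ 2 * D * T ^ 2 := by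
            nlinarith [mul_le_mul_of_nonneg_left hT (by positivity : 0 ≤ D * T)]
          gcongr
      _ = a ^ 2 / (D * T) - a ^ 2 / (D * (T + 1)) := by
          field_simp
          ring
  calc (1 + a ^ 2 / (2 * D * T ^ 2)) * gaussianWeight D T a
      ≤ Real.exp (a ^ 2 / (D * T) - a ^ 2 / (D * (T + 1))) * gaussianWeight D T a := by
        have := gaussianWeight_pos D T a
        gcongr
        linarith [Real.add_one_le_exp (a ^ 2 / (D * T) - a ^ 2 / (D * (T + 1)))]
    _ = gaussianWeight D (T + 1) a := by
        rw [gaussianWeight, gaussianWeight, ← Real.exp_add]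
        congr 1
        ring

theorem gaussianWeight_le_succ (hD : 0 < D) (hT : 1 ≤ T) :
    gaussianWeight D T a ≤ gaussianWeight D (T + 1) a :=
  (le_mul_of_one_le_left (gaussianWeight_pos D T a).le
    (le_add_of_nonneg_right (by positivity))).trans (one_add_mul_gaussianWeight_le hD hT)

theorem sq_gaussianWeight_sub_div_add_le_succ_sub (hD : 6 ≤ D) (hDε : 36 ≤ D * ε) (hT : 1 ≤ T)
    (ha : 1 ≤ a) (haT : a ≤ 2 * T) (hab : |a - b| ≤ 1) :
    (gaussianWeight D T a - gaussianWeight D T b) ^ 2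
        / (gaussianWeight D T a + gaussianWeight D T b)
      ≤ 2 * ε * (gaussianWeight D (T + 1) a - gaussianWeight D T a) := by
  have hX := gaussianWeight_pos D T a
  have hε : 0 ≤ ε := by by_contra! h; nlinarith
  calc _ ≤ (6 * a / (D * T)) ^ 2 * gaussianWeight D T a :=
        sq_gaussianWeight_sub_div_add_le hD hT ha haT hab
    _ = 36 * (a ^ 2 / (D * T) ^ 2) * gaussianWeight D T a := by ring
    _ ≤ D * ε * (a ^ 2 / (D * T) ^ 2) * gaussianWeight D T a := by gcongr
    _ = 2 * ε * (a ^ 2 / (2 * D * T ^ 2) * gaussianWeight D T a) := by field_simp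
    _ ≤ 2 * ε * (gaussianWeight D (T + 1) a - gaussianWeight D T a) := by
        gcongr
        linarith [one_add_mul_gaussianWeight_le (a := a) (by linarith : 0 < D) hT]

end Gaussian

section SymmetricSums

variable {ι : Type*} [Fintype ι] {c : ι → ι → ℝ}

theorem sum_sum_mul_symmetrize (hc : ∀ x y, c x y = c y x) (H : ι → ι → ℝ) :
    ∑ x, ∑ y, c x y * H x y = ∑ x, ∑ y, c x y * ((H x y + H y x) / 2) := by
  have swap : ∑ x, ∑ y, c x y * H y x = ∑ x, ∑ y, c x y * H x y := by
    rw [Finset.sum_comm]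
    exact Finset.sum_congr rfl fun x _ => Finset.sum_congr rfl fun y _ => by rw [hc]
  calc ∑ x, ∑ y, c x y * H x y
      = (∑ x, ∑ y, c x y * H x y + ∑ x, ∑ y, c x y * H y x) / 2 := by rw [swap]; ring
    _ = ∑ x, ∑ y, c x y * ((H x y + H y x) / 2) := by
        simp only [← Finset.sum_add_distrib, Finset.sum_div]
        exact Finset.sum_congr rfl fun x _ => Finset.sum_congr rfl fun y _ => by ring

theorem sum_sum_mul_sq_sub (hc : ∀ x y, c x y = c y x) (f : ι → ℝ) :
    ∑ x, ∑ y, c x y * (f x - f y) ^ 2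
      = 2 * (∑ x, f x ^ 2 * ∑ y, c x y) - 2 * ∑ x, ∑ y, c x y * (f x * f y) := by
  have := sum_sum_mul_symmetrize hc fun x y => 2 * (f x ^ 2 - f x * f y)
  calc ∑ x, ∑ y, c x y * (f x - f y) ^ 2
      = ∑ x, ∑ y, c x y * (2 * (f x ^ 2 - f x * f y)) := by
        rw [this]
        exact Finset.sum_congr rfl fun x _ => Finset.sum_congr rfl fun y _ => by ring
    _ = _ := by
        simp only [Finset.mul_sum, ← Finset.sum_sub_distrib]
        exact Finset.sum_congr rfl fun x _ => Finset.sum_congr rfl fun y _ => by ring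

theorem sum_sum_mul_add_sq_le (hc : ∀ x y, c x y = c y x) (hc0 : ∀ x y, 0 ≤ c x y)
    {m : ι → ℝ} (hm : ∀ x, ∑ y, c x y ≤ m x) {v b : ι → ℝ} {q : ι → ι → ℝ}
    (hq : ∀ x y, q x y = q y x) (hb : ∀ x, v x ≠ 0 → 0 ≤ b x)
    (hqb : ∀ x y, v x ≠ 0 → c x y ≠ 0 → q x y ≤ b x) :
    ∑ x, ∑ y, c x y * ((v x ^ 2 + v y ^ 2) * q x y) ≤ 2 * ∑ x, v x ^ 2 * b x * m x := by
  have termwise : ∀ x y, c x y * (2 * v x ^ 2 * q x y) ≤ c x y * (2 * v x ^ 2 * b x) := by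
    intro x y
    by_cases hv : v x = 0
    · simp [hv]
    by_cases hcxy : c x y = 0
    · simp [hcxy]
    have := hc0 x y
    gcongr
    exact hqb x y hv hcxy
  calc ∑ x, ∑ y, c x y * ((v x ^ 2 + v y ^ 2) * q x y)
      = ∑ x, ∑ y, c x y * (2 * v x ^ 2 * q x y) := by
        rw [sum_sum_mul_symmetrize hc fun x y => 2 * v x ^ 2 * q x y]
        refine Finset.sum_congr rfl fun x _ => Finset.sum_congr rfl fun y _ => ?_
        rw [hq y x]
        ring
    _ ≤ ∑ x, ∑ y, c x y * (2 * v x ^ 2 * b x) :=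
        Finset.sum_le_sum fun x _ => Finset.sum_le_sum fun y _ => termwise x y
    _ = ∑ x, 2 * v x ^ 2 * b x * ∑ y, c x y :=
        Finset.sum_congr rfl fun x _ => by rw [← Finset.sum_mul, mul_comm]
    _ ≤ ∑ x, 2 * v x ^ 2 * b x * m x := by
        refine Finset.sum_le_sum fun x _ => ?_
        by_cases hv : v x = 0
        · simp [hv]
        have := hb x hv
        gcongr
        exact hm x
    _ = 2 * ∑ x, v x ^ 2 * b x * m x := by
        rw [Finset.mul_sum]
        exact Finset.sum_congr rfl fun x _ => by ring

end SymmetricSums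

/-- A finite weighted graph whose random walk may be killed: vertex weights `mass`, symmetric
edge weights `cond`, and at each vertex a weight `kill` of the edges leading to the cemetery.
Finite subsets of a weighted graph with Dirichlet boundary conditions are of this form. -/
structure KilledNetwork (ι : Type*) where
  mass : ι → ℝ
  cond : ι → ι → ℝ
  kill : ι → ℝ
  mass_pos : ∀ x, 0 < mass x
  cond_nonneg : ∀ x y, 0 ≤ cond x y
  cond_symm : ∀ x y, cond x y = cond y x
  kill_nonneg : ∀ x, 0 ≤ kill x

namespace KilledNetwork

variable {ι : Type*} [Fintype ι] (N : KilledNetwork ι)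

/-- The total weight of the edges at a vertex, including those leading to the cemetery. -/
noncomputable def deg (x : ι) : ℝ := ∑ y, N.cond x y + N.kill x

/-- The Dirichlet form of functions that vanish at the cemetery. -/
noncomputable def energy (f : ι → ℝ) : ℝ :=
  (∑ x, ∑ y, N.cond x y * (f x - f y) ^ 2) / 2 + ∑ x, N.kill x * f x ^ 2

/-- The squared norm of `L²(mass)`. -/
noncomputable def normSq (f : ι → ℝ) : ℝ := ∑ x, f x ^ 2 * N.mass x

/-- Uniform laziness: the walk stays put with probability at least `ε`. -/
structure IsLazy (ε : ℝ) : Prop where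
  pos : 0 < ε
  lt_one : ε < 1
  deg_le : ∀ x, N.deg x ≤ (1 - ε) * N.mass x

/-- The sub-Markov transition matrix of the killed random walk. -/
noncomputable def kernel [DecidableEq ι] : Matrix ι ι ℝ :=
  diagonal (fun x => 1 - N.deg x / N.mass x) + of fun x y => N.cond x y / N.mass x

variable {N}

theorem sum_cond_le_deg (x : ι) : ∑ y, N.cond x y ≤ N.deg x :=
  le_add_of_nonneg_right (N.kill_nonneg x)

theorem normSq_nonneg (f : ι → ℝ) : 0 ≤ N.normSq f :=
  Finset.sum_nonneg fun x _ => mul_nonneg (sq_nonneg _) (N.mass_pos x).le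

theorem energy_eq (f : ι → ℝ) :
    N.energy f = ∑ x, f x ^ 2 * N.deg x - ∑ x, ∑ y, N.cond x y * (f x * f y) := by
  rw [energy, sum_sum_mul_sq_sub N.cond_symm]
  simp only [deg, mul_add, Finset.sum_add_distrib, mul_comm (N.kill _)]
  ring

theorem kernel_mulVec [DecidableEq ι] (v : ι → ℝ) (x : ι) :
    (N.kernel *ᵥ v) x = v x + (∑ y, N.cond x y * (v y - v x) - N.kill x * v x) / N.mass x := by
  have hm := (N.mass_pos x).ne'
  calc (N.kernel *ᵥ v) x
      = (1 - N.deg x / N.mass x) * v x + (∑ y, N.cond x y * v y) / N.mass x := by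
        rw [kernel, add_mulVec, Pi.add_apply, mulVec_diagonal]
        simp only [mulVec, dotProduct, of_apply, div_mul_eq_mul_div, Finset.sum_div]
    _ = _ := by
        simp only [deg, mul_sub, Finset.sum_sub_distrib, ← Finset.sum_mul]
        field_simp
        ring

namespace IsLazy

variable {ε : ℝ} (hN : N.IsLazy ε)
include hN

theorem deg_le_mass (x : ι) : N.deg x ≤ N.mass x :=
  (hN.deg_le x).trans (mul_le_of_le_one_left (N.mass_pos x).le (by linarith [hN.pos]))

theorem energy_le (f : ι → ℝ) : N.energy f ≤ 2 * N.normSq f := by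
  have cross : (∑ x, ∑ y, N.cond x y * (f x - f y) ^ 2) / 2
      ≤ 2 * ∑ x, f x ^ 2 * ∑ y, N.cond x y := by
    have := sum_sum_mul_add_sq_le (v := f) (b := 1) (q := 1) N.cond_symm N.cond_nonneg
      (fun x => le_rfl) (fun _ _ => rfl) (fun _ _ => zero_le_one) (fun _ _ _ _ => le_rfl)
    have termwise : ∑ x, ∑ y, N.cond x y * (f x - f y) ^ 2
        ≤ 2 * ∑ x, ∑ y, N.cond x y * (f x ^ 2 + f y ^ 2) := by
      simp only [Finset.mul_sum]
      refine Finset.sum_le_sum fun x _ => Finset.sum_le_sum fun y _ => ?_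
      nlinarith [mul_nonneg (N.cond_nonneg x y) (sq_nonneg (f x + f y))]
    simp only [Pi.one_apply, mul_one] at this
    linarith
  have with_kill : 2 * ∑ x, f x ^ 2 * ∑ y, N.cond x y + ∑ x, N.kill x * f x ^ 2
      ≤ 2 * ∑ x, f x ^ 2 * N.deg x := by
    simp only [Finset.mul_sum, ← Finset.sum_add_distrib, deg]
    refine Finset.sum_le_sum fun x _ => ?_
    simp only [← Finset.mul_sum]
    nlinarith [mul_nonneg (N.kill_nonneg x) (sq_nonneg (f x))]
  have deg_le : ∑ x, f x ^ 2 * N.deg x ≤ N.normSq f :=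
    Finset.sum_le_sum fun x _ => mul_le_mul_of_nonneg_left (hN.deg_le_mass x) (sq_nonneg _)
  rw [energy]
  linarith

variable [DecidableEq ι]

theorem kernel_nonneg (x y : ι) : 0 ≤ N.kernel x y := by
  have stay : 0 ≤ 1 - N.deg x / N.mass x :=
    sub_nonneg.2 (div_le_one_of_le₀ (hN.deg_le_mass x) (N.mass_pos x).le)
  have move : 0 ≤ N.cond x y / N.mass x := div_nonneg (N.cond_nonneg x y) (N.mass_pos x).le
  simp only [kernel, Matrix.add_apply, diagonal_apply, of_apply]
  split_ifs <;> positivity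

theorem kernel_mulVec_mono {u v : ι → ℝ} (h : u ≤ v) : N.kernel *ᵥ u ≤ N.kernel *ᵥ v :=
  fun x => dotProduct_le_dotProduct_of_nonneg_left h (hN.kernel_nonneg x)

theorem kernel_mulVec_sq_mul_mass_le (v : ι → ℝ) (x : ι) :
    (N.kernel *ᵥ v) x ^ 2 * N.mass x + N.kill x * v x ^ 2
      ≤ v x ^ 2 * N.mass x
        + ∑ y, N.cond x y * (v y ^ 2 - v x ^ 2 - ε * (v x - v y) ^ 2) := by
  set L := ∑ y, N.cond x y * (v y - v x) - N.kill x * v x with hL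
  set S := ∑ y, N.cond x y * (v y - v x) ^ 2 + N.kill x * v x ^ 2 with hS
  have hm := N.mass_pos x
  have hk := N.kill_nonneg x
  have S_nonneg : 0 ≤ S :=
    add_nonneg (Finset.sum_nonneg fun y _ => mul_nonneg (N.cond_nonneg x y) (sq_nonneg _))
      (mul_nonneg hk (sq_nonneg _))
  have cauchy_schwarz : L ^ 2 ≤ N.deg x * S := by
    let c : Option ι → ℝ := fun o => o.elim (N.kill x) (N.cond x)
    let δ : Option ι → ℝ := fun o => o.elim (-v x) fun y => v y - v x
    have hc : ∀ o, 0 ≤ c o := Option.forall.2 ⟨hk, N.cond_nonneg x⟩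
    have := Finset.sum_sq_le_sum_mul_sum_of_sq_le_mul Finset.univ (fun o _ => hc o)
      (fun o _ => mul_nonneg (hc o) (sq_nonneg (δ o))) (r := fun o => c o * δ o)
      fun o _ => (by ring : (c o * δ o) ^ 2 = c o * (c o * δ o ^ 2)).le
    simp only [Fintype.sum_option, c, δ, Option.elim, neg_sq, mul_neg] at this
    rwa [neg_add_eq_sub, add_comm (N.kill x), add_comm (N.kill x * _)] at this
  have L_sq_le : L ^ 2 / N.mass x ≤ (1 - ε) * S := by
    rw [div_le_iff₀ hm]
    nlinarith [mul_le_mul_of_nonneg_right (hN.deg_le x) S_nonneg]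
  have expand : (N.kernel *ᵥ v) x ^ 2 * N.mass x
      = v x ^ 2 * N.mass x + 2 * v x * L + L ^ 2 / N.mass x := by
    rw [kernel_mulVec, ← hL]
    field_simp
    ring
  have regroup : 2 * v x * L + (1 - ε) * S + (1 + ε) * (N.kill x * v x ^ 2)
      = ∑ y, N.cond x y * (v y ^ 2 - v x ^ 2 - ε * (v x - v y) ^ 2) := by
    rw [hL, hS, mul_sub, mul_add (1 - ε), Finset.mul_sum, Finset.mul_sum]
    calc _ = ∑ y, 2 * v x * (N.cond x y * (v y - v x))
          + ∑ y, (1 - ε) * (N.cond x y * (v y - v x) ^ 2) := by ring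
      _ = _ := by
        rw [← Finset.sum_add_distrib]
        exact Finset.sum_congr rfl fun y _ => by ring
  nlinarith [mul_nonneg hN.pos.le (mul_nonneg hk (sq_nonneg (v x)))]

theorem sum_kernel_mulVec_sq_le (v : ι → ℝ) {g : ι → ℝ} (hg : ∀ x, 0 ≤ g x) :
    ∑ x, (N.kernel *ᵥ v) x ^ 2 * g x * N.mass x + ∑ x, N.kill x * v x ^ 2 * g x
      ≤ ∑ x, v x ^ 2 * g x * N.mass x
        + ∑ x, ∑ y, N.cond x y * -(ε * (v x - v y) ^ 2 * ((g x + g y) / 2)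
          + (v x ^ 2 - v y ^ 2) * (g x - g y) / 2) := by
  calc ∑ x, (N.kernel *ᵥ v) x ^ 2 * g x * N.mass x + ∑ x, N.kill x * v x ^ 2 * g x
      = ∑ x, g x * ((N.kernel *ᵥ v) x ^ 2 * N.mass x + N.kill x * v x ^ 2) := by
        rw [← Finset.sum_add_distrib]
        exact Finset.sum_congr rfl fun x _ => by ring
    _ ≤ ∑ x, g x * (v x ^ 2 * N.mass x
          + ∑ y, N.cond x y * (v y ^ 2 - v x ^ 2 - ε * (v x - v y) ^ 2)) :=
        Finset.sum_le_sum fun x _ =>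
          mul_le_mul_of_nonneg_left (hN.kernel_mulVec_sq_mul_mass_le v x) (hg x)
    _ = ∑ x, v x ^ 2 * g x * N.mass x
          + ∑ x, ∑ y, N.cond x y * (g x * (v y ^ 2 - v x ^ 2 - ε * (v x - v y) ^ 2)) := by
        rw [← Finset.sum_add_distrib]
        refine Finset.sum_congr rfl fun x _ => ?_
        rw [mul_add, Finset.mul_sum]
        exact congrArg₂ _ (by ring) (Finset.sum_congr rfl fun y _ => by ring)
    _ = _ := by
        rw [sum_sum_mul_symmetrize N.cond_symm]
        exact congrArg _ <|
          Finset.sum_congr rfl fun x _ => Finset.sum_congr rfl fun y _ => by ring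

theorem sum_kernel_mulVec_sq_mul_le {v g g₀ : ι → ℝ} (hg : ∀ x, 0 < g x)
    (hg₀ : ∀ x, v x ≠ 0 → g x ≤ g₀ x)
    (hgrad : ∀ x y, v x ≠ 0 → N.cond x y ≠ 0 →
      (g x - g y) ^ 2 / (g x + g y) ≤ 2 * ε * (g₀ x - g x)) :
    ∑ x, (N.kernel *ᵥ v) x ^ 2 * g x * N.mass x ≤ ∑ x, v x ^ 2 * g₀ x * N.mass x := by
  have hε := hN.pos
  have kill_nonneg : 0 ≤ ∑ x, N.kill x * v x ^ 2 * g x :=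
    Finset.sum_nonneg fun x _ => mul_nonneg (mul_nonneg (N.kill_nonneg x) (sq_nonneg _)) (hg x).le
  have energy_le :
      ∑ x, ∑ y, N.cond x y * -(ε * (v x - v y) ^ 2 * ((g x + g y) / 2)
          + (v x ^ 2 - v y ^ 2) * (g x - g y) / 2)
        ≤ ∑ x, ∑ y, N.cond x y
          * ((v x ^ 2 + v y ^ 2) * ((g x - g y) ^ 2 / (g x + g y) / (4 * ε))) :=
    Finset.sum_le_sum fun x _ => Finset.sum_le_sum fun y _ =>
      mul_le_mul_of_nonneg_left (neg_sq_mul_sub_mul_le hε _ _ (hg x) (hg y)) (N.cond_nonneg x y)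
  have gain_le := sum_sum_mul_add_sq_le (v := v) (b := fun x => (g₀ x - g x) / 2)
    (q := fun x y => (g x - g y) ^ 2 / (g x + g y) / (4 * ε)) N.cond_symm N.cond_nonneg
    (fun x => (sum_cond_le_deg x).trans (hN.deg_le_mass x))
    (fun x y => by rw [add_comm (g x), ← neg_sub, neg_sq])
    (fun x hx => by linarith [hg₀ x hx])
    (fun x y hx hxy => by
      rw [div_le_iff₀ (by positivity)]
      linarith [hgrad x y hx hxy])
  have regroup : ∑ x, v x ^ 2 * g x * N.mass x + 2 * ∑ x, v x ^ 2 * ((g₀ x - g x) / 2) * N.mass x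
      = ∑ x, v x ^ 2 * g₀ x * N.mass x := by
    rw [Finset.mul_sum, ← Finset.sum_add_distrib]
    exact Finset.sum_congr rfl fun x _ => by ring
  linarith [hN.sum_kernel_mulVec_sq_le v fun x => (hg x).le]

omit [DecidableEq ι] in
theorem sum_cond_mul_sq_sub_le {v h : ι → ℝ} {L : ℝ} (U : Finset ι)
    (hL : ∀ x y, N.cond x y ≠ 0 → |h x - h y| ≤ L)
    (hU : ∀ x y, N.cond x y ≠ 0 → x ∉ U → h x = h y) :
    ∑ x, ∑ y, N.cond x y * ((v x ^ 2 + v y ^ 2) * (h x - h y) ^ 2)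
      ≤ 2 * L ^ 2 * ∑ x ∈ U, v x ^ 2 * N.mass x := by
  classical
  have gradient_le := sum_sum_mul_add_sq_le (v := v)
    (b := fun x => if x ∈ U then L ^ 2 else 0) (q := fun x y => (h x - h y) ^ 2)
    N.cond_symm N.cond_nonneg
    (fun x => (sum_cond_le_deg x).trans (hN.deg_le_mass x))
    (fun x y => by rw [← neg_sub, neg_sq])
    (fun x _ => by split_ifs <;> positivity)
    (fun x y _ hxy => by
      split_ifs with hx
      · exact sq_le_sq' (neg_le_of_abs_le (hL x y hxy)) (le_of_abs_le (hL x y hxy))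
      · simp [hU x y hxy hx])
  refine gradient_le.trans_eq ?_
  simp only [mul_ite, ite_mul, mul_zero, zero_mul, Finset.sum_ite_mem, Finset.univ_inter,
    Finset.mul_sum]
  exact Finset.sum_congr rfl fun x _ => by ring

theorem caccioppoli {v w h : ι → ℝ} {L : ℝ} (U : Finset ι) (hw : 0 ≤ w) (hwv : w ≤ N.kernel *ᵥ v)
    (hL : ∀ x y, N.cond x y ≠ 0 → |h x - h y| ≤ L)
    (hU : ∀ x y, N.cond x y ≠ 0 → x ∉ U → h x = h y) :
    N.normSq (w * h) ≤ N.normSq (v * h) - ε / 2 * N.energy (v * h)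
      + 4 / ε * L ^ 2 * ∑ x ∈ U, v x ^ 2 * N.mass x := by
  have hε := hN.pos
  have le_next : N.normSq (w * h) ≤ ∑ x, (N.kernel *ᵥ v) x ^ 2 * h x ^ 2 * N.mass x := by
    refine Finset.sum_le_sum fun x _ => ?_
    have := N.mass_pos x
    rw [Pi.mul_apply, mul_pow]
    gcongr
    · exact hw x
    · exact hwv x
  have energy_le :
      ∑ x, ∑ y, N.cond x y * -(ε * (v x - v y) ^ 2 * ((h x ^ 2 + h y ^ 2) / 2)
          + (v x ^ 2 - v y ^ 2) * (h x ^ 2 - h y ^ 2) / 2)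
        ≤ 2 / ε * ∑ x, ∑ y, N.cond x y * ((v x ^ 2 + v y ^ 2) * (h x - h y) ^ 2)
          - ε / 4 * ∑ x, ∑ y, N.cond x y * (v x * h x - v y * h y) ^ 2 := by
    simp only [Finset.mul_sum, ← Finset.sum_sub_distrib]
    refine Finset.sum_le_sum fun x _ => Finset.sum_le_sum fun y _ => ?_
    nlinarith [mul_le_mul_of_nonneg_left
      (neg_sq_mul_sub_mul_sq_le hε hN.lt_one (v x) (v y) (h x) (h y)) (N.cond_nonneg x y)]
  have gradient_le : 2 / ε * ∑ x, ∑ y, N.cond x y * ((v x ^ 2 + v y ^ 2) * (h x - h y) ^ 2)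
      ≤ 4 / ε * L ^ 2 * ∑ x ∈ U, v x ^ 2 * N.mass x :=
    (mul_le_mul_of_nonneg_left (hN.sum_cond_mul_sq_sub_le U hL hU) (by positivity)).trans_eq
      (by ring)
  have kill_le : ε / 2 * ∑ x, N.kill x * (v x * h x) ^ 2 ≤ ∑ x, N.kill x * v x ^ 2 * h x ^ 2 := by
    rw [Finset.mul_sum]
    refine Finset.sum_le_sum fun x _ => ?_
    nlinarith [mul_nonneg (N.kill_nonneg x) (sq_nonneg (v x * h x)), hN.lt_one]
  have normSq_eq : N.normSq (v * h) = ∑ x, v x ^ 2 * h x ^ 2 * N.mass x := by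
    simp only [normSq, Pi.mul_apply, mul_pow]
  have := hN.sum_kernel_mulVec_sq_le v (g := fun x => h x ^ 2) fun x => sq_nonneg _
  simp only [energy, Pi.mul_apply]
  linarith

end IsLazy

section DeGiorgi

/-- `d` changes by at most one along every edge, as the distance to a base point does. -/
def IsDistanceLike (N : KilledNetwork ι) (d : ι → ℝ) : Prop :=
  ∀ x y, N.cond x y ≠ 0 → |d x - d y| ≤ 1

/-- The squared `L²` norm, over the ball `{d ≤ R}`, of the part of `u` above the level `t`: the
quantity that is iterated in De Giorgi's argument. -/
noncomputable def excess (N : KilledNetwork ι) (d u : ι → ℝ) (R t : ℝ) : ℝ :=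
  ∑ x with d x ≤ R, (u x - t)⁺ ^ 2 * N.mass x

/-- The Faber-Krahn inequality with profile `Λ` in the ball `{d ≤ R}`, stated for functions rather
than for the first eigenvalues of their supports. -/
def IsFaberKrahn (N : KilledNetwork ι) (d : ι → ℝ) (R : ℝ) (Λ : ℝ → ℝ) : Prop :=
  ∀ ν > 0, ∀ f : ι → ℝ, (∀ x, f x ≠ 0 → d x ≤ R) → ∑ x with f x ≠ 0, N.mass x ≤ ν →
    Λ ν * N.normSq f ≤ N.energy f

variable {d u : ι → ℝ} {R R' δ t t' : ℝ}

theorem excess_nonneg : 0 ≤ N.excess d u R t :=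
  Finset.sum_nonneg fun x _ => mul_nonneg (sq_nonneg _) (N.mass_pos x).le

theorem excess_mono (hR : R ≤ R') (ht : t' ≤ t) : N.excess d u R t ≤ N.excess d u R' t' := by
  have hm := fun x => (N.mass_pos x).le
  calc N.excess d u R t ≤ ∑ x with d x ≤ R, (u x - t')⁺ ^ 2 * N.mass x := by
        refine Finset.sum_le_sum fun x _ => ?_
        have := posPart_nonneg (u x - t)
        have := posPart_mono (sub_le_sub_left ht (u x))
        have := hm x
        gcongr
    _ ≤ N.excess d u R' t' :=
        Finset.sum_le_sum_of_subset_of_nonneg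
          (Finset.monotone_filter_right _ fun x _ hx => hx.trans hR)
          fun x _ _ => mul_nonneg (sq_nonneg _) (hm x)

theorem sq_mul_mass_le_excess {x : ι} (hx : d x ≤ R) :
    (u x - t)⁺ ^ 2 * N.mass x ≤ N.excess d u R t :=
  Finset.single_le_sum (f := fun y => (u y - t)⁺ ^ 2 * N.mass y)
    (fun y _ => mul_nonneg (sq_nonneg _) (N.mass_pos y).le) (by simpa using hx)

theorem excess_le_normSq_truncation (hδ : 0 < δ) :
    N.excess d u R t ≤ N.normSq (truncation d u R δ t) := by
  calc N.excess d u R t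
      = ∑ x with d x ≤ R, truncation d u R δ t x ^ 2 * N.mass x := by
        refine Finset.sum_congr rfl fun x hx => ?_
        rw [truncation, Pi.mul_apply, cutoff_eq_one hδ (Finset.mem_filter.1 hx).2, mul_one]
    _ ≤ N.normSq (truncation d u R δ t) :=
        Finset.sum_le_sum_of_subset_of_nonneg (Finset.filter_subset _ _)
          fun x _ _ => mul_nonneg (sq_nonneg _) (N.mass_pos x).le

theorem normSq_truncation_le_excess (hδ : 0 < δ) :
    N.normSq (truncation d u R δ t) ≤ N.excess d u (R + δ) t := by
  rw [excess, Finset.sum_filter]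
  refine Finset.sum_le_sum fun x _ => ?_
  have hm := N.mass_pos x
  split_ifs with hx
  · have := mul_le_of_le_one_right (posPart_nonneg (u x - t))
      (cutoff_le_one (R := R) (δ := δ) (d x))
    have := mul_nonneg (posPart_nonneg (u x - t)) (cutoff_nonneg (R := R) (δ := δ) (d x))
    rw [truncation, Pi.mul_apply]
    gcongr
  · rw [not_imp_comm.1 (le_of_truncation_ne_zero hδ) hx]
    simp

theorem mass_support_truncation_le (hδ : 0 < δ) (htt' : t < t') :
    (∑ x with truncation d u R δ t' x ≠ 0, N.mass x) * (t' - t) ^ 2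
      ≤ N.excess d u (R + δ) t := by
  have hm := fun x => (N.mass_pos x).le
  rw [Finset.sum_mul]
  calc ∑ x with truncation d u R δ t' x ≠ 0, N.mass x * (t' - t) ^ 2
      ≤ ∑ x with truncation d u R δ t' x ≠ 0, (u x - t)⁺ ^ 2 * N.mass x := by
        refine Finset.sum_le_sum fun x hx => ?_
        have hu := lt_of_truncation_ne_zero (Finset.mem_filter.1 hx).2
        have := hm x
        rw [mul_comm]
        gcongr
        exact (sub_le_sub_right hu.le t).trans (le_posPart _)
    _ ≤ N.excess d u (R + δ) t :=
        Finset.sum_le_sum_of_subset_of_nonneg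
          (Finset.monotone_filter_right _ fun x _ hx => le_of_truncation_ne_zero hδ hx)
          fun x _ _ => mul_nonneg (sq_nonneg _) (hm x)

theorem IsFaberKrahn.mul_normSq_truncation_le {Λ : ℝ → ℝ} {ν : ℝ} (hfk : N.IsFaberKrahn d R' Λ)
    (hδ : 0 < δ) (hR : R + δ ≤ R') (htt' : t < t') (hν : 0 < ν)
    (hM : N.excess d u (R + δ) t ≤ ν * (t' - t) ^ 2) :
    Λ ν * N.normSq (truncation d u R δ t') ≤ N.energy (truncation d u R δ t') :=
  hfk ν hν _ (fun _ hx => (le_of_truncation_ne_zero hδ hx).trans hR) <|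
    le_of_mul_le_mul_right ((mass_support_truncation_le hδ htt').trans hM)
      (pow_pos (sub_pos.2 htt') 2)

variable [DecidableEq ι] {ε : ℝ} (hN : N.IsLazy ε)
include hN

theorem IsLazy.posPart_sub_le {u' : ι → ℝ} (ht : 0 ≤ t) (hu : u' ≤ N.kernel *ᵥ u) :
    (fun x => (u' x - t)⁺) ≤ N.kernel *ᵥ fun x => (u x - t)⁺ := by
  have sub_le : u ≤ (fun x => (u x - t)⁺) + fun _ => t := fun x =>
    sub_le_iff_le_add.1 (le_posPart (u x - t))
  have kernel_const_le : ∀ x, (N.kernel *ᵥ fun _ => t) x ≤ t := fun x => by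
    have : 0 ≤ N.kill x * t / N.mass x :=
      div_nonneg (mul_nonneg (N.kill_nonneg x) ht) (N.mass_pos x).le
    simp only [kernel_mulVec, sub_self, mul_zero, Finset.sum_const_zero, zero_sub, neg_div]
    linarith
  intro x
  refine sup_le ?_ <| dotProduct_nonneg_of_nonneg (hN.kernel_nonneg x) fun y => posPart_nonneg _
  have := hN.kernel_mulVec_mono sub_le x
  rw [mulVec_add, Pi.add_apply] at this
  linarith [hu x, kernel_const_le x]

theorem IsLazy.normSq_truncation_step_le (hd : N.IsDistanceLike d) {u' : ι → ℝ} (hδ : 0 < δ)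
    (ht : 0 ≤ t) (hu : u' ≤ N.kernel *ᵥ u) :
    N.normSq (truncation d u' R δ t) ≤ N.normSq (truncation d u R δ t)
      - ε / 2 * N.energy (truncation d u R δ t)
      + 4 / ε * (1 / δ) ^ 2 * N.excess d u (R + δ + 1) t := by
  refine hN.caccioppoli _ (fun x => posPart_nonneg _) (hN.posPart_sub_le ht hu)
    (fun x y hxy => (abs_cutoff_sub_le hδ _ _).trans (by gcongr; exact hd x y hxy))
    fun x y hxy hx => ?_
  have hdx : R + δ + 1 < d x := by simpa using hx
  have hdy : R + δ < d y := by linarith [le_of_abs_le (hd x y hxy)]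
  rw [cutoff_eq_zero hδ (by linarith), cutoff_eq_zero hδ hdy.le]

theorem IsLazy.excess_le (hd : N.IsDistanceLike d) {Λ : ℝ → ℝ} (hfk : N.IsFaberKrahn d R' Λ)
    {u : ℕ → ι → ℝ} {n : ℕ} {M ν : ℝ} (hn : 0 < n) (hu : ∀ i < n, u (i + 1) ≤ N.kernel *ᵥ u i)
    (hδ : 0 < δ) (hR : R + δ ≤ R') (ht : 0 ≤ t) (htt' : t < t') (hν : 0 < ν) (hΛ : 0 < Λ ν)
    (hMν : M ≤ ν * (t' - t) ^ 2) (hM : ∀ i ≤ n, N.excess d (u i) (R + δ + 1) t ≤ M) :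
    N.excess d (u n) R t' ≤ 2 / (ε * Λ ν) * (1 / n + 4 / (ε * δ ^ 2)) * M := by
  have hε := hN.pos
  set J : ℕ → ℝ := fun i => N.normSq (truncation d (u i) R δ t')
  have M_nonneg : 0 ≤ M := excess_nonneg.trans (hM 0 n.zero_le)
  have faber_krahn : ∀ i ≤ n, Λ ν * J i ≤ N.energy (truncation d (u i) R δ t') := fun i hi =>
    hfk.mul_normSq_truncation_le hδ hR htt' hν
      ((excess_mono (by linarith) le_rfl).trans ((hM i hi).trans hMν))
  have step : ∀ i < n, J (i + 1) ≤ (1 - ε * Λ ν / 2) * J i + 4 / ε * (1 / δ) ^ 2 * M := by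
    intro i hi
    have excess_le : 4 / ε * (1 / δ) ^ 2 * N.excess d (u i) (R + δ + 1) t'
        ≤ 4 / ε * (1 / δ) ^ 2 * M := by
      gcongr
      exact (excess_mono le_rfl htt'.le).trans (hM i hi.le)
    linarith [hN.normSq_truncation_step_le hd hδ (ht.trans htt'.le) (R := R) (hu i hi),
      mul_le_mul_of_nonneg_left (faber_krahn i hi.le) hε.le]
  have initial : J 0 ≤ M := (normSq_truncation_le_excess hδ).trans
    ((excess_mono (by linarith) htt'.le).trans (hM 0 n.zero_le))
  have final : J n ≤ 2 / (ε * Λ ν) * (1 / n + 4 / (ε * δ ^ 2)) * M := by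
    rcases (normSq_nonneg (N := N) (truncation d (u n) R δ t')).eq_or_lt with h0 | hpos
    · refine h0.symm.trans_le ?_
      positivity
    have Λ_le_two : Λ ν ≤ 2 :=
      le_of_mul_le_mul_right ((faber_krahn n le_rfl).trans (hN.energy_le _)) hpos
    calc J n ≤ J 0 / (ε * Λ ν / 2 * n) + 4 / ε * (1 / δ) ^ 2 * M / (ε * Λ ν / 2) :=
          le_div_add_div_of_affine_recursion hn (by positivity) (by nlinarith [hN.lt_one])
            (normSq_nonneg _) step (by positivity)
      _ ≤ M / (ε * Λ ν / 2 * n) + 4 / ε * (1 / δ) ^ 2 * M / (ε * Λ ν / 2) := by gcongr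
      _ = 2 / (ε * Λ ν) * (1 / n + 4 / (ε * δ ^ 2)) * M := by
          have : (n : ℝ) ≠ 0 := by exact_mod_cast hn.ne'
          field_simp
  exact (excess_le_normSq_truncation hδ).trans final

end DeGiorgi

section MeanValue

/-- The factor by which the measure of the support of the truncations shrinks, at each halving of
the scale, in De Giorgi's iteration with a Faber-Krahn inequality of exponent `α`. -/
noncomputable def shrinkFactor (α : ℝ) : ℝ := 4⁻¹ ^ α⁻¹

/-- The value of `r² Λ` that makes the excess over a ball of radius `r` decrease, in the first
halving of the scale, by the factor `shrinkFactor α / 4`. -/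
noncomputable def spectralConst (ε α : ℝ) : ℝ := 4 * (16 / ε + 512 / ε ^ 2) / shrinkFactor α

/-- The constant of the `L²` mean value inequality `sq_le_meanValueConst_mul`. -/
noncomputable def meanValueConst (ε a α : ℝ) : ℝ :=
  8 * (spectralConst ε α / a) ^ α⁻¹ + 2 * (128 / a) ^ α⁻¹

theorem shrinkFactor_pos (α : ℝ) : 0 < shrinkFactor α := Real.rpow_pos_of_pos (by norm_num) _

theorem spectralConst_pos {ε α : ℝ} (hε : 0 < ε) : 0 < spectralConst ε α := by
  have := shrinkFactor_pos α
  unfold spectralConst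
  positivity

theorem meanValueConst_pos {ε a α : ℝ} (hε : 0 < ε) (ha : 0 < a) : 0 < meanValueConst ε a α := by
  have := spectralConst_pos (α := α) hε
  unfold meanValueConst
  positivity

theorem shrinkFactor_pow_rpow {α : ℝ} (hα : α ≠ 0) (j : ℕ) :
    (shrinkFactor α ^ j) ^ α = (4 ^ j)⁻¹ := by
  rw [← Real.rpow_pow_comm (shrinkFactor_pos α).le, shrinkFactor,
    Real.rpow_inv_rpow (by norm_num) hα, inv_pow]

theorem sq_div_le_floor {k : ℕ} {r T : ℝ} (hr : r ^ 2 = 2 * k) (hT : 1 ≤ T) (hTr : 8 * T ≤ r) :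
    r ^ 2 / (8 * T) ≤ ⌊k / (2 * T)⌋₊ := by
  have half : (k : ℝ) / (2 * T) = 2 * (r ^ 2 / (8 * T)) := by rw [hr]; field_simp; ring
  have one_le : 1 ≤ r ^ 2 / (8 * T) := by rw [one_le_div (by positivity)]; nlinarith
  linarith [Nat.lt_floor_add_one ((k : ℝ) / (2 * T))]

theorem exists_minimal_scale (r : ℝ) : ∃ J : ℕ, r < 8 * 2 ^ J ∧ ∀ i < J, 8 * 2 ^ i ≤ r := by
  have unbounded : ∃ J : ℕ, r < 8 * 2 ^ J := by
    obtain ⟨J, hJ⟩ := pow_unbounded_of_one_lt r one_lt_two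
    exact ⟨J, by linarith [pow_pos (two_pos : (0 : ℝ) < 2) J]⟩
  classical
  exact ⟨Nat.find unbounded, Nat.find_spec unbounded,
    fun i hi => not_lt.1 (Nat.find_min unbounded hi)⟩

theorem four_pow_eq (j : ℕ) : (4 : ℝ) ^ j = (2 ^ j) ^ 2 := by
  rw [← pow_mul, mul_comm, pow_mul]
  norm_num

/-- Bound on the excess in the parabolic cylinder of De Giorgi's iteration at scale `T⁻¹`: the
times range over `[k (1 - 1 / T), k]`, the radius `r (1 + 1 / T) / 2` decreases from `r` to `r / 2`
and the level `t (1 - 1 / T)` increases from `0` to `t` as `T` increases from `1` to `∞`. -/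
def ExcessBound (N : KilledNetwork ι) (d : ι → ℝ) (u : ℕ → ι → ℝ) (k : ℕ) (r t T M : ℝ) : Prop :=
  ∀ s ≤ k, k * (1 - 1 / T) ≤ s → N.excess d (u s) (r * (1 + 1 / T) / 2) (t * (1 - 1 / T)) ≤ M

variable [DecidableEq ι] {ε : ℝ} {d : ι → ℝ} {u : ℕ → ι → ℝ} {k : ℕ} {r t M : ℝ}

theorem IsLazy.excessBound_two_mul (hN : N.IsLazy ε) (hd : N.IsDistanceLike d) {Λ : ℝ → ℝ}
    (hfk : N.IsFaberKrahn d r Λ) (hu : ∀ i < k, u (i + 1) ≤ N.kernel *ᵥ u i) (hr : r ^ 2 = 2 * k)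
    (ht : 0 < t) {T ν : ℝ} (hT : 1 ≤ T) (hTr : 8 * T ≤ r) (hν : 0 < ν) (hΛ : 0 < Λ ν)
    (hM : 0 ≤ M) (hMν : M ≤ ν * (t / (2 * T)) ^ 2) (h : N.ExcessBound d u k r t T M) :
    N.ExcessBound d u k r t (2 * T) ((16 / ε + 512 / ε ^ 2) * (T ^ 2 / (r ^ 2 * Λ ν)) * M) := by
  have hε := hN.pos
  have hr0 : 0 < r := by linarith
  intro s hsk hs
  set n := ⌊k / (2 * T)⌋₊
  have n_le : (n : ℝ) ≤ k / (2 * T) := Nat.floor_le (by positivity)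
  have le_n : r ^ 2 / (8 * T) ≤ n := sq_div_le_floor hr hT hTr
  have hn0 : 0 < n := Nat.cast_pos.1 (lt_of_lt_of_le (by positivity) le_n)
  have halves : k * (1 - 1 / T) = k * (1 - 1 / (2 * T)) - k / (2 * T) := by field_simp; ring
  have one_sub_nonneg : 0 ≤ 1 - 1 / T := sub_nonneg.2 (div_le_one_of_le₀ hT (by linarith))
  have n_le_s : n ≤ s := by
    have := mul_nonneg (k.cast_nonneg (α := ℝ)) one_sub_nonneg
    exact_mod_cast (by linarith : (n : ℝ) ≤ s)
  have radius : r * (1 + 1 / (2 * T)) / 2 + r / (8 * T) + 1 ≤ r * (1 + 1 / T) / 2 := by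
    have : 1 ≤ r / (8 * T) := (one_le_div (by positivity)).2 hTr
    have : r * (1 + 1 / T) / 2 = r * (1 + 1 / (2 * T)) / 2 + 2 * (r / (8 * T)) := by
      field_simp; ring
    linarith
  have level : t * (1 - 1 / (2 * T)) - t * (1 - 1 / T) = t / (2 * T) := by field_simp; ring
  have step := hN.excess_le hd hfk (u := fun i => u (s - n + i)) (δ := r / (8 * T))
    (t := t * (1 - 1 / T)) (t' := t * (1 - 1 / (2 * T))) hn0
    (fun i hi => hu _ (by lia))
    (by positivity) (by nlinarith [div_le_one_of_le₀ hT (by linarith)])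
    (mul_nonneg ht.le one_sub_nonneg)
    (sub_pos.1 (level ▸ by positivity)) hν hΛ (level ▸ hMν) fun i hi =>
      (excess_mono radius le_rfl).trans <| h _ (by lia) <| by
        push_cast [n_le_s]
        linarith [(i.cast_nonneg : (0 : ℝ) ≤ i)]
  rw [Nat.sub_add_cancel n_le_s] at step
  calc N.excess d (u s) (r * (1 + 1 / (2 * T)) / 2) (t * (1 - 1 / (2 * T)))
      ≤ 2 / (ε * Λ ν) * (1 / n + 4 / (ε * (r / (8 * T)) ^ 2)) * M := step
    _ ≤ 2 / (ε * Λ ν) * (1 / (r ^ 2 / (8 * T)) * T + 4 / (ε * (r / (8 * T)) ^ 2)) * M := by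
        gcongr
        exact (one_div_le_one_div_of_le (by positivity) le_n).trans
          (le_mul_of_one_le_right (by positivity) hT)
    _ = (16 / ε + 512 / ε ^ 2) * (T ^ 2 / (r ^ 2 * Λ ν)) * M := by field_simp; ring

variable {a α F : ℝ} (hN : N.IsLazy ε) (ha : 0 < a) (hα : 0 < α) (hF : 0 < F)
include hN ha hα hF

theorem IsLazy.excessBound_two_pow (hd : N.IsDistanceLike d)
    (hfk : N.IsFaberKrahn d r fun ν => a / r ^ 2 * (F / ν) ^ α)
    (hu : ∀ i < k, u (i + 1) ≤ N.kernel *ᵥ u i) (hr0 : 0 < r) (hr : r ^ 2 = 2 * k)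
    (ht : 0 < t) (hM : 0 ≤ M) (htM : t ^ 2 * F = 4 * M * (spectralConst ε α / a) ^ α⁻¹)
    (h0 : ∀ s ≤ k, N.excess d (u s) r 0 ≤ M) (j : ℕ) (hj : ∀ i < j, 8 * 2 ^ i ≤ r) :
    N.ExcessBound d u k r t (2 ^ j) ((shrinkFactor α / 4) ^ j * M) := by
  have hB := shrinkFactor_pos α
  have hA := spectralConst_pos (α := α) hN.pos
  induction j with
  | zero =>
    intro s hsk _
    convert h0 s hsk using 2 <;> norm_num
  | succ j ih =>
    have hε := hN.pos
    set κ := (spectralConst ε α / a) ^ α⁻¹ with hκ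
    have κ_pos : 0 < κ := Real.rpow_pos_of_pos (div_pos hA ha) _
    have eigenvalue : a / r ^ 2 * (F / (shrinkFactor α ^ j * F / κ)) ^ α
        = spectralConst ε α * 4 ^ j / r ^ 2 := by
      rw [show F / (shrinkFactor α ^ j * F / κ) = κ / shrinkFactor α ^ j by field_simp,
        Real.div_rpow κ_pos.le (by positivity), shrinkFactor_pow_rpow hα.ne',
        hκ, Real.rpow_inv_rpow (by positivity) hα.ne']
      field_simp
    have measure : (shrinkFactor α / 4) ^ j * M
        = shrinkFactor α ^ j * F / κ * (t / (2 * 2 ^ j)) ^ 2 := by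
      rw [div_pow, four_pow_eq]
      field_simp
      linarith
    have halve := hN.excessBound_two_mul hd hfk hu hr ht (ν := shrinkFactor α ^ j * F / κ)
      (one_le_pow₀ one_le_two) (hj j j.lt_succ_self) (by positivity)
      (by rw [eigenvalue]; positivity) (by positivity) measure.le
      (ih fun i hi => hj i (hi.trans j.lt_succ_self))
    rw [eigenvalue, ← pow_succ'] at halve
    convert halve using 1
    rw [pow_succ, spectralConst, four_pow_eq]
    field_simp

omit [DecidableEq ι] in
theorem IsLazy.shrinkFactor_pow_le_mass {x : ι} (hr : 0 < r) (hx : d x ≤ r)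
    (hfk : N.IsFaberKrahn d r fun ν => a / r ^ 2 * (F / ν) ^ α) {J : ℕ} (hJ : r < 8 * 2 ^ J) :
    shrinkFactor α ^ J * F ≤ (128 / a) ^ α⁻¹ * N.mass x := by
  classical
  have hm := N.mass_pos x
  have hB := shrinkFactor_pos α
  have eigenvalue_le : a / r ^ 2 * (F / N.mass x) ^ α ≤ 2 := by
    have support : ∀ y, (Pi.single x 1 : ι → ℝ) y ≠ 0 ↔ y = x := fun y => by
      simp [Pi.single_apply]
    have normSq_pos : 0 < N.normSq (Pi.single x 1) := by
      simp [normSq, Pi.single_apply, hm]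
    refine le_of_mul_le_mul_right ((hfk _ hm (Pi.single x 1) ?_ ?_).trans (hN.energy_le _))
      normSq_pos
    · intro y hy
      rwa [(support y).1 hy]
    · refine (Finset.sum_le_sum_of_subset_of_nonneg (t := {x}) (fun y hy => ?_)
        fun y _ _ => (N.mass_pos y).le).trans_eq (Finset.sum_singleton N.mass x)
      simpa [support] using hy
  have rpow_le : (shrinkFactor α ^ J * F / N.mass x) ^ α ≤ 128 / a := by
    have r_sq_le : r ^ 2 ≤ 64 * 4 ^ J := by
      rw [four_pow_eq]
      nlinarith
    rw [mul_div_assoc, Real.mul_rpow (by positivity) (by positivity), shrinkFactor_pow_rpow hα.ne',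
      inv_mul_le_iff₀ (by positivity)]
    calc (F / N.mass x) ^ α = r ^ 2 / a * (a / r ^ 2 * (F / N.mass x) ^ α) := by field_simp
      _ ≤ 64 * 4 ^ J / a * 2 := by gcongr
      _ = 4 ^ J * (128 / a) := by ring
  rw [← div_le_iff₀ hm]
  exact (Real.le_rpow_inv_iff_of_pos (by positivity) (by positivity) hα).2 rpow_le

omit [DecidableEq ι] in
theorem IsLazy.sq_posPart_sub_le {x : ι} (hr : 0 < r) (ht : 0 ≤ t) (hM : 0 ≤ M) (hx : d x ≤ 0)
    (hfk : N.IsFaberKrahn d r fun ν => a / r ^ 2 * (F / ν) ^ α) {J : ℕ} (hJ : r < 8 * 2 ^ J)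
    (bound : N.ExcessBound d u k r t (2 ^ J) ((shrinkFactor α / 4) ^ J * M)) :
    (u k x - t)⁺ ^ 2 ≤ (128 / a) ^ α⁻¹ * M / F := by
  have hm := N.mass_pos x
  have hB := shrinkFactor_pos α
  have level_le : t * (1 - 1 / 2 ^ J) ≤ t :=
    mul_le_of_le_one_right ht (sub_le_self _ (by positivity))
  have time_le : k * (1 - 1 / (2 : ℝ) ^ J) ≤ k :=
    mul_le_of_le_one_right k.cast_nonneg (sub_le_self _ (by positivity))
  refine le_of_mul_le_mul_right ?_ hm
  calc (u k x - t)⁺ ^ 2 * N.mass x ≤ (shrinkFactor α / 4) ^ J * M :=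
        (sq_mul_mass_le_excess hx).trans
          ((excess_mono (by positivity) level_le).trans (bound k le_rfl time_le))
    _ ≤ shrinkFactor α ^ J * M := by gcongr; linarith
    _ = shrinkFactor α ^ J * F * (M / F) := by field_simp
    _ ≤ (128 / a) ^ α⁻¹ * N.mass x * (M / F) :=
        mul_le_mul_of_nonneg_right
          (hN.shrinkFactor_pow_le_mass ha hα hF hr (hx.trans hr.le) hfk hJ) (by positivity)
    _ = (128 / a) ^ α⁻¹ * M / F * N.mass x := by ring

theorem IsLazy.sq_le_meanValueConst_mul (hd : N.IsDistanceLike d)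
    (hfk : N.IsFaberKrahn d r fun ν => a / r ^ 2 * (F / ν) ^ α)
    (hu : ∀ i < k, u (i + 1) ≤ N.kernel *ᵥ u i) (hr0 : 0 < r) (hr : r ^ 2 = 2 * k)
    (hM : 0 < M) (h0 : ∀ s ≤ k, N.excess d (u s) r 0 ≤ M) {x : ι} (hx : d x ≤ 0)
    (hux : 0 ≤ u k x) : u k x ^ 2 ≤ meanValueConst ε a α * M / F := by
  have hκ : 0 < (spectralConst ε α / a) ^ α⁻¹ :=
    Real.rpow_pos_of_pos (div_pos (spectralConst_pos hN.pos) ha) _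
  set κ := (spectralConst ε α / a) ^ α⁻¹
  set t := Real.sqrt (4 * M * κ / F)
  have t_sq : t ^ 2 = 4 * M * κ / F := Real.sq_sqrt (by positivity)
  have t_nonneg : 0 ≤ t := Real.sqrt_nonneg _
  obtain ⟨J, hJ, hJmin⟩ := exists_minimal_scale r
  have bound := hN.excessBound_two_pow ha hα hF hd hfk hu hr0 hr (t := t)
    (Real.sqrt_pos.2 (by positivity)) hM.le (by rw [t_sq, div_mul_cancel₀ _ hF.ne']) h0 J hJmin
  have above_level := hN.sq_posPart_sub_le ha hα hF hr0 t_nonneg hM.le hx hfk hJ bound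
  have split : u k x ≤ t + (u k x - t)⁺ := by linarith [le_posPart (u k x - t)]
  calc u k x ^ 2 ≤ (t + (u k x - t)⁺) ^ 2 := by gcongr
    _ ≤ 2 * t ^ 2 + 2 * (u k x - t)⁺ ^ 2 := by nlinarith [sq_nonneg (t - (u k x - t)⁺)]
    _ ≤ 2 * (4 * M * κ / F) + 2 * ((128 / a) ^ α⁻¹ * M / F) := by rw [t_sq]; gcongr
    _ = meanValueConst ε a α * M / F := by rw [meanValueConst]; ring

end MeanValue

section WeightedKernel

variable [DecidableEq ι] {d : ι → ℝ} {D ε : ℝ} {k : ℕ} {x : ι}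

theorem IsDistanceLike.abs_sub_le_of_kernel_ne_zero (hd : N.IsDistanceLike d) {x y : ι}
    (h : N.kernel x y ≠ 0) : |d x - d y| ≤ 1 := by
  by_cases hxy : x = y
  · simp [hxy]
  · refine hd x y fun hc => h ?_
    rw [kernel, Matrix.add_apply, diagonal_apply_ne _ hxy, of_apply, hc, zero_div, zero_add]

theorem IsDistanceLike.abs_sub_le_of_kernel_pow_ne_zero (hd : N.IsDistanceLike d) (s : ℕ)
    {x y : ι} (h : (N.kernel ^ s) x y ≠ 0) : |d x - d y| ≤ s := by
  induction s generalizing x with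
  | zero =>
    have hxy : x = y := by
      by_contra hxy
      exact h (one_apply_ne hxy)
    simp [hxy]
  | succ s ih =>
    rw [pow_succ', mul_apply] at h
    obtain ⟨z, -, hz⟩ := Finset.exists_ne_zero_of_sum_ne_zero h
    push_cast
    linarith [abs_sub_le (d x) (d z) (d y), ih (right_ne_zero_of_mul hz),
      hd.abs_sub_le_of_kernel_ne_zero (left_ne_zero_of_mul hz)]

/-- The weighted energy `E_D(k, x)` of the heat kernel of `N`, with `d` in the role of the distance
to `x`. -/
noncomputable def gaussianEnergy (N : KilledNetwork ι) (d : ι → ℝ) (D : ℝ) (k : ℕ) (x : ι) : ℝ :=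
  ∑ w, ((N.kernel ^ k) x w / N.mass w) ^ 2 * Real.exp (max 1 (d w) ^ 2 / (D * k)) * N.mass w

/-- The heat kernel times the Gaussian weight in `E_D(k, x)`. Started from this function, the heat
semigroup takes the value `E_D(k, x)` at `x` at time `k`. -/
noncomputable def weightedKernel (N : KilledNetwork ι) (d : ι → ℝ) (D : ℝ) (k : ℕ) (x : ι) :
    ι → ℝ :=
  fun w => (N.kernel ^ k) x w / N.mass w * Real.exp (max 1 (d w) ^ 2 / (D * k))

theorem gaussianEnergy_nonneg : 0 ≤ N.gaussianEnergy d D k x :=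
  Finset.sum_nonneg fun w _ =>
    mul_nonneg (mul_nonneg (sq_nonneg _) (Real.exp_pos _).le) (N.mass_pos w).le

theorem kernel_pow_mulVec_weightedKernel :
    (N.kernel ^ k *ᵥ N.weightedKernel d D k x) x = N.gaussianEnergy d D k x := by
  refine Finset.sum_congr rfl fun w _ => ?_
  have := (N.mass_pos w).ne'
  rw [weightedKernel]
  field_simp

theorem IsDistanceLike.le_of_kernel_pow_mulVec_weightedKernel_ne_zero (hd : N.IsDistanceLike d)
    (hx : d x = 0) {s : ℕ} {y : ι} (h : (N.kernel ^ s *ᵥ N.weightedKernel d D k x) y ≠ 0) :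
    d y ≤ s + k := by
  obtain ⟨w, -, hw⟩ := Finset.exists_ne_zero_of_sum_ne_zero h
  have hk : (N.kernel ^ k) x w ≠ 0 := fun h0 => right_ne_zero_of_mul hw <| by
    rw [weightedKernel, h0, zero_div, zero_mul]
  linarith [abs_le.1 (hd.abs_sub_le_of_kernel_pow_ne_zero s (left_ne_zero_of_mul hw)),
    abs_le.1 (hd.abs_sub_le_of_kernel_pow_ne_zero k hk)]

variable (hN : N.IsLazy ε) (hd : N.IsDistanceLike d) (hDε : 72 ≤ D * ε) (hx : d x = 0)
include hN hd hDε hx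

theorem IsLazy.sum_sq_kernel_pow_mulVec_weightedKernel_le {s : ℕ} (hs : s ≤ k) :
    ∑ y, (N.kernel ^ s *ᵥ N.weightedKernel d D k x) y ^ 2
        * gaussianWeight (D / 2) (2 * k - s) (max 1 (d y)) * N.mass y
      ≤ N.gaussianEnergy d D k x := by
  have hD : 72 ≤ D := by nlinarith [hN.pos, hN.lt_one]
  induction s with
  | zero =>
    refine (Finset.sum_congr rfl fun y _ => ?_).le
    have cancel : Real.exp (max 1 (d y) ^ 2 / (D * k)) ^ 2
        * gaussianWeight (D / 2) (2 * k - (0 : ℕ)) (max 1 (d y))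
        = Real.exp (max 1 (d y) ^ 2 / (D * k)) := by
      rw [gaussianWeight, ← Real.exp_nat_mul, ← Real.exp_add]
      congr 1
      push_cast
      ring
    rw [pow_zero, one_mulVec, weightedKernel, mul_pow, mul_assoc (_ ^ 2), cancel]
  | succ s ih =>
    refine le_trans ?_ (ih (by lia))
    have hsk : (s + 1 : ℝ) ≤ k := by exact_mod_cast hs
    have time : (2 * k - s : ℝ) = 2 * k - (s + 1 : ℕ) + 1 := by push_cast; ring
    have time_ge : (1 : ℝ) ≤ 2 * k - (s + 1 : ℕ) := by
      push_cast
      linarith [(s.cast_nonneg : (0 : ℝ) ≤ s)]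
    rw [pow_succ', ← mulVec_mulVec, time]
    refine hN.sum_kernel_mulVec_sq_mul_le (fun y => gaussianWeight_pos _ _ _)
      (fun y _ => gaussianWeight_le_succ (by linarith) time_ge)
      fun y z hy hyz => sq_gaussianWeight_sub_div_add_le_succ_sub (by linarith) (by linarith)
        time_ge (le_max_left _ _) ?_ ?_
    · have := hd.le_of_kernel_pow_mulVec_weightedKernel_ne_zero hx hy
      push_cast at *
      exact max_le (by linarith) (by linarith)
    · simpa using (abs_max_sub_max_le_max 1 (d y) 1 (d z)).trans
        (max_le (by simp) (hd y z hyz))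

theorem IsLazy.excess_kernel_pow_mulVec_weightedKernel_le (hk : 0 < k) {s : ℕ} (hs : s ≤ k) :
    N.excess d (N.kernel ^ s *ᵥ N.weightedKernel d D k x) (Real.sqrt (2 * k)) 0
      ≤ Real.exp (4 / D) * N.gaussianEnergy d D k x := by
  have hD : 72 ≤ D := by nlinarith [hN.pos, hN.lt_one]
  have hk1 : (1 : ℝ) ≤ k := by exact_mod_cast hk
  have hsk : (s : ℝ) ≤ k := by exact_mod_cast hs
  have weight_ge : ∀ y, d y ≤ Real.sqrt (2 * k) →
      1 ≤ Real.exp (4 / D) * gaussianWeight (D / 2) (2 * k - s) (max 1 (d y)) := by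
    intro y hy
    have sq_le : max 1 (d y) ^ 2 ≤ 2 * k := by
      refine (Real.le_sqrt (by positivity) (by positivity)).1 (max_le ?_ hy)
      exact Real.one_le_sqrt.2 (by linarith)
    rw [gaussianWeight, ← Real.exp_add, Real.one_le_exp_iff, ← sub_eq_add_neg, sub_nonneg]
    calc max 1 (d y) ^ 2 / (D / 2 * (2 * k - s)) ≤ 2 * k / (D / 2 * k) := by
          gcongr
          linarith
      _ = 4 / D := by field_simp; norm_num
  refine le_trans ?_ (mul_le_mul_of_nonneg_left
    (hN.sum_sq_kernel_pow_mulVec_weightedKernel_le hd hDε hx hs) (Real.exp_pos _).le)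
  rw [Finset.mul_sum, excess, Finset.sum_filter]
  refine Finset.sum_le_sum fun y _ => ?_
  set v := N.kernel ^ s *ᵥ N.weightedKernel d D k x
  have hm := N.mass_pos y
  have hg := gaussianWeight_pos (D / 2) (2 * k - s) (max 1 (d y))
  split_ifs with hy
  · calc (v y - 0)⁺ ^ 2 * N.mass y ≤ v y ^ 2 * N.mass y := by
          rw [sub_zero]
          gcongr ?_ * _
          rw [sq_le_sq, abs_of_nonneg (posPart_nonneg _)]
          exact sup_le (le_abs_self _) (abs_nonneg _)
      _ ≤ v y ^ 2 * N.mass y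
            * (Real.exp (4 / D) * gaussianWeight (D / 2) (2 * k - s) (max 1 (d y))) :=
          le_mul_of_one_le_right (by positivity) (weight_ge y hy)
      _ = _ := by ring
  · positivity

theorem IsLazy.gaussianEnergy_le {a α F : ℝ} (ha : 0 < a) (hα : 0 < α) (hF : 0 < F) (hk : 0 < k)
    (hfk : N.IsFaberKrahn d (Real.sqrt (2 * k))
      fun ν => a / Real.sqrt (2 * k) ^ 2 * (F / ν) ^ α) :
    N.gaussianEnergy d D k x ≤ meanValueConst ε a α * Real.exp (4 / D) / F := by
  have hC := meanValueConst_pos (ε := ε) (α := α) hN.pos ha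
  rcases (gaussianEnergy_nonneg (N := N) (d := d) (D := D) (k := k) (x := x)).eq_or_lt with h0 | hE
  · rw [← h0]
    positivity
  have hr : 0 < (2 * k : ℝ) := by positivity
  have mean_value := hN.sq_le_meanValueConst_mul ha hα hF hd hfk
    (u := fun s => N.kernel ^ s *ᵥ N.weightedKernel d D k x) (x := x)
    (fun s _ => by simp only [pow_succ', mulVec_mulVec, le_refl])
    (Real.sqrt_pos.2 hr) (Real.sq_sqrt hr.le) (mul_pos (Real.exp_pos (4 / D)) hE)
    (fun s => hN.excess_kernel_pow_mulVec_weightedKernel_le hd hDε hx hk) hx.le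
    (by simpa only [kernel_pow_mulVec_weightedKernel] using hE.le)
  simp only [kernel_pow_mulVec_weightedKernel] at mean_value
  refine le_of_mul_le_mul_right ?_ hE
  calc _ = N.gaussianEnergy d D k x ^ 2 := (sq _).symm
    _ ≤ _ := mean_value
    _ = _ := by ring

end WeightedKernel

end KilledNetwork

namespace WeightedGraph

variable {V : Type*} (Γ : WeightedGraph V)

section MarkovKernel

variable {Γ}

theorem wE_self (x : V) : Γ.wE x x = 0 := by
  by_contra h
  exact Γ.G.irrefl ((Γ.adapted x x).1 ((Γ.wE_nonneg x x).lt_of_ne' h))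

theorem mkernel_nonneg (x y : V) : 0 ≤ mkernel Γ.wV Γ.wE x y := by
  rw [mkernel]
  split_ifs
  · exact sub_nonneg.2 (div_le_one_of_le₀ (Γ.subordinate x) (Γ.wV_pos x).le)
  · exact div_nonneg (Γ.wE_nonneg x y) (Γ.wV_pos x).le

theorem mkernel_eq [DecidableEq V] (x y : V) :
    mkernel Γ.wV Γ.wE x y
      = (if y = x then 1 - (∑' z, Γ.wE x z) / Γ.wV x else 0) + Γ.wE x y / Γ.wV x := by
  by_cases h : x = y
  · simp [mkernel, h, wE_self]
  · simp [mkernel, h, Ne.symm h]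

theorem hasSum_mkernel (x : V) : HasSum (mkernel Γ.wV Γ.wE x) 1 := by
  classical
  have := (hasSum_ite_eq x (1 - (∑' z, Γ.wE x z) / Γ.wV x)).add
    ((Γ.wE_summable x).hasSum.div_const (Γ.wV x))
  rwa [sub_add_cancel, ← funext (mkernel_eq x)] at this

open Classical in
/-- The transition probabilities of the walk killed on leaving `Ω` after its start, as functions on
all of `V` so that different `Ω` can be compared. -/
noncomputable def killedPow (Γ : WeightedGraph V) (Ω : Finset V) : ℕ → V → V → ℝ
  | 0 => fun x y => if x = y then 1 else 0
  | n + 1 => fun x y => ∑ z ∈ Ω, mkernel Γ.wV Γ.wE x z * killedPow Γ Ω n z y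

theorem killedPow_nonneg (Ω : Finset V) (n : ℕ) (x y : V) : 0 ≤ Γ.killedPow Ω n x y := by
  induction n generalizing x with
  | zero => simp only [killedPow]; split_ifs <;> norm_num
  | succ n ih => exact Finset.sum_nonneg fun z _ => mul_nonneg (mkernel_nonneg x z) (ih z)

theorem killedPow_le_one (Ω : Finset V) (n : ℕ) (x y : V) : Γ.killedPow Ω n x y ≤ 1 := by
  induction n generalizing x with
  | zero => simp only [killedPow]; split_ifs <;> norm_num
  | succ n ih =>
    calc Γ.killedPow Ω (n + 1) x y ≤ ∑ z ∈ Ω, mkernel Γ.wV Γ.wE x z :=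
          Finset.sum_le_sum fun z _ => mul_le_of_le_one_right (mkernel_nonneg x z) (ih z)
      _ ≤ 1 := sum_le_hasSum Ω (fun z _ => mkernel_nonneg x z) (hasSum_mkernel x)

theorem tendsto_killedPow (n : ℕ) (x y : V) :
    Tendsto (fun Ω => Γ.killedPow Ω n x y) atTop (𝓝 (mkernelPow Γ.wV Γ.wE n x y)) := by
  classical
  induction n generalizing x with
  | zero => exact tendsto_const_nhds
  | succ n ih =>
    have as_tsum : ∀ Ω, Γ.killedPow Ω (n + 1) x y
        = ∑' z, if z ∈ Ω then mkernel Γ.wV Γ.wE x z * Γ.killedPow Ω n z y else 0 := fun Ω => by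
      rw [tsum_eq_sum (s := Ω) fun z hz => if_neg hz]
      exact Finset.sum_congr rfl fun z hz => (if_pos hz).symm
    simp only [as_tsum, mkernelPow]
    refine tendsto_tsum_of_dominated_convergence (hasSum_mkernel (Γ := Γ) x).summable
      (fun z => ?_) (Eventually.of_forall fun Ω z => ?_)
    · refine ((ih z).const_mul _).congr' ?_
      filter_upwards [eventually_ge_atTop {z}] with Ω hΩ
      rw [if_pos (Finset.singleton_subset_iff.1 hΩ)]
    · have hK := mkernel_nonneg (Γ := Γ) x z
      split_ifs
      · rw [Real.norm_of_nonneg (mul_nonneg hK (killedPow_nonneg Ω n z y))]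
        exact mul_le_of_le_one_right hK (killedPow_le_one Ω n z y)
      · rwa [norm_zero]

end MarkovKernel

section Dirichlet

/-- The subset `Ω` with Dirichlet boundary conditions: edges leaving `Ω` lead to the cemetery. -/
noncomputable def dirichlet (Ω : Finset V) : KilledNetwork Ω where
  mass x := Γ.wV x
  cond x y := Γ.wE x y
  kill x := ∑' y, Γ.wE x y - ∑ y : Ω, Γ.wE x y
  mass_pos x := Γ.wV_pos x
  cond_nonneg x y := Γ.wE_nonneg x y
  cond_symm x y := Γ.wE_symm x y
  kill_nonneg x := by
    rw [Finset.sum_coe_sort Ω (Γ.wE x), sub_nonneg]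
    exact (Γ.wE_summable x).sum_le_tsum Ω fun y _ => Γ.wE_nonneg x y

variable {Γ} {Ω : Finset V}

theorem deg_dirichlet (x : Ω) : (Γ.dirichlet Ω).deg x = ∑' y, Γ.wE x y := add_sub_cancel _ _

theorem UniformlyLazy.isLazy_dirichlet {ε : ℝ} (h : Γ.UniformlyLazy ε) (Ω : Finset V) :
    (Γ.dirichlet Ω).IsLazy ε where
  pos := h.1.1
  lt_one := h.1.2
  deg_le x := (deg_dirichlet x).trans_le (h.2 x)

theorem isDistanceLike_dirichlet (Ω : Finset V) (x : V) :
    (Γ.dirichlet Ω).IsDistanceLike fun y => (Γ.G.dist x y : ℝ) := by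
  intro y z hyz
  have hadj : Γ.G.Adj y z := (Γ.adapted y z).1 ((Γ.wE_nonneg y z).lt_of_ne' hyz)
  have dist_eq : Γ.G.dist y z = 1 := SimpleGraph.dist_eq_one_iff_adj.2 hadj
  have dist_eq' : Γ.G.dist z y = 1 := SimpleGraph.dist_eq_one_iff_adj.2 hadj.symm
  have le_y : Γ.G.dist x y ≤ Γ.G.dist x z + 1 := dist_eq' ▸ Γ.connected.dist_triangle
  have le_z : Γ.G.dist x z ≤ Γ.G.dist x y + 1 := dist_eq ▸ Γ.connected.dist_triangle
  rw [abs_sub_le_iff, sub_le_iff_le_add', sub_le_iff_le_add']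
  beta_reduce
  constructor <;> assumption_mod_cast

theorem kernel_pow_dirichlet [DecidableEq V] (n : ℕ) (x y : Ω) :
    ((Γ.dirichlet Ω).kernel ^ n) x y = Γ.killedPow Ω n x y := by
  have kernel_eq : ∀ x z : Ω, (Γ.dirichlet Ω).kernel x z = mkernel Γ.wV Γ.wE x z := by
    intro x z
    rw [mkernel_eq, KilledNetwork.kernel, Matrix.add_apply, diagonal_apply, of_apply, deg_dirichlet]
    simp only [Subtype.ext_iff, eq_comm (a := (x : V)), dirichlet]
  induction n generalizing x with
  | zero =>
    simp only [killedPow, pow_zero, one_apply, Subtype.ext_iff]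
    congr
  | succ n ih =>
    simp only [pow_succ', mul_apply, kernel_eq, ih, killedPow]
    exact Finset.sum_coe_sort Ω fun z => mkernel Γ.wV Γ.wE x z * Γ.killedPow Ω n z y

end Dirichlet

section FaberKrahn

variable {Γ} {Ω : Finset V} {f : V → ℝ}

theorem energy_nonneg (f : V → ℝ) : 0 ≤ Γ.energy f :=
  div_nonneg (tsum_nonneg fun x => tsum_nonneg fun y => mul_nonneg (sq_nonneg _)
    (Γ.wE_nonneg x y)) zero_le_two

theorem sqnorm_nonneg (f : V → ℝ) : 0 ≤ Γ.sqnorm f :=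
  tsum_nonneg fun x => mul_nonneg (sq_nonneg _) (Γ.wV_pos x).le

theorem lambda1_mul_sqnorm_le (hf : ∀ x, f x ≠ 0 → x ∈ Ω) :
    Γ.lambda1 Ω * Γ.sqnorm f ≤ Γ.energy f := by
  rcases (sqnorm_nonneg (Γ := Γ) f).eq_or_lt with h0 | hpos
  · rw [← h0, mul_zero]
    exact energy_nonneg f
  · have f_ne_zero : f ≠ 0 := by
      rintro rfl
      simp [sqnorm] at hpos
    refine (le_div_iff₀ hpos).1 (csInf_le ⟨0, ?_⟩ ⟨f, f_ne_zero, hf, rfl⟩)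
    rintro _ ⟨g, -, -, rfl⟩
    exact div_nonneg (energy_nonneg g) (sqnorm_nonneg g)

theorem sqnorm_eq_normSq_dirichlet (hf : ∀ x, f x ≠ 0 → x ∈ Ω) :
    Γ.sqnorm f = (Γ.dirichlet Ω).normSq fun x => f x := by
  rw [sqnorm, tsum_eq_sum (s := Ω) fun x hx => by simp [not_imp_comm.1 (hf x) hx],
    ← Finset.sum_coe_sort]
  rfl

theorem hasSum_sq_sub_mul_wE (hf : ∀ x, f x ≠ 0 → x ∈ Ω) (x : V) :
    HasSum (fun y => (f x - f y) ^ 2 * Γ.wE x y)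
      (f x ^ 2 * ∑' y, Γ.wE x y + ∑ y ∈ Ω, (f y ^ 2 - 2 * (f x * f y)) * Γ.wE x y) := by
  refine (((Γ.wE_summable x).hasSum.mul_left (f x ^ 2)).add
    (hasSum_sum_of_ne_finset_zero fun y hy => ?_)).congr_fun fun y => ?_
  · simp [not_imp_comm.1 (hf y) hy]
  · ring

theorem energy_eq_energy_dirichlet (hf : ∀ x, f x ≠ 0 → x ∈ Ω) :
    Γ.energy f = (Γ.dirichlet Ω).energy fun x => f x := by
  have diagonal_part : HasSum (fun x => ∑ y ∈ Ω, f y ^ 2 * Γ.wE y x)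
      (∑ y ∈ Ω, f y ^ 2 * ∑' x, Γ.wE y x) :=
    hasSum_sum fun y _ => (Γ.wE_summable y).hasSum.mul_left _
  have supported_part : HasSum
      (fun x => f x ^ 2 * (∑' y, Γ.wE x y) - 2 * ∑ y ∈ Ω, Γ.wE x y * (f x * f y))
      (∑ x ∈ Ω, (f x ^ 2 * (∑' y, Γ.wE x y) - 2 * ∑ y ∈ Ω, Γ.wE x y * (f x * f y))) :=
    hasSum_sum_of_ne_finset_zero fun x hx => by simp [not_imp_comm.1 (hf x) hx]
  have total : ∑' x, ∑' y, (f x - f y) ^ 2 * Γ.wE x y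
      = 2 * (∑ x ∈ Ω, f x ^ 2 * (∑' y, Γ.wE x y) - ∑ x ∈ Ω, ∑ y ∈ Ω, Γ.wE x y * (f x * f y)) := by
    simp only [(hasSum_sq_sub_mul_wE hf _).tsum_eq]
    refine ((diagonal_part.add supported_part).congr_fun fun x => ?_).tsum_eq.trans ?_
    · rw [Finset.mul_sum, ← add_sub_assoc, add_comm _ (f x ^ 2 * _), add_sub_assoc,
        ← Finset.sum_sub_distrib]
      refine congrArg _ <| Finset.sum_congr rfl fun y _ => ?_
      rw [Γ.wE_symm y x]
      ring
    · rw [Finset.sum_sub_distrib, ← Finset.mul_sum]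
      ring
  rw [energy, total, KilledNetwork.energy_eq, mul_div_cancel_left₀ _ two_ne_zero]
  simp only [deg_dirichlet]
  simp only [← Finset.sum_coe_sort Ω, dirichlet]

theorem IsRelFK.isFaberKrahn_dirichlet {Λ : V → ℝ → ℝ → ℝ} (h : Γ.IsRelFK Λ) (Ω : Finset V)
    (z : V) (r : ℝ) :
    (Γ.dirichlet Ω).IsFaberKrahn (fun y => (Γ.G.dist z y : ℝ)) r (Λ z r) := by
  classical
  intro ν _ f hf hfν
  let S : Finset Ω := {x | f x ≠ 0}
  rcases S.eq_empty_or_nonempty with hS | hS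
  · have f_eq_zero : ∀ x, f x = 0 := by simpa [S, Finset.filter_eq_empty_iff] using hS
    simp [KilledNetwork.normSq, KilledNetwork.energy, f_eq_zero]
  let g : V → ℝ := fun x => if h : x ∈ Ω then f ⟨x, h⟩ else 0
  have g_coe : (fun x : Ω => g x) = f := funext fun x => dif_pos x.2
  have g_support : ∀ x, g x ≠ 0 → x ∈ S.map (Function.Embedding.subtype _) := by
    intro x hx
    have hxΩ : x ∈ Ω := by_contra fun h => hx (dif_neg h)
    simpa [g, hxΩ, S] using hx
  have g_support' : ∀ x, g x ≠ 0 → x ∈ Ω := fun x hx => by_contra fun h => hx (dif_neg h)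
  have mass_le : ∑ x ∈ S.map (Function.Embedding.subtype _), Γ.wV x ≤ ν := by
    rwa [Finset.sum_map]
  rw [← g_coe, ← sqnorm_eq_normSq_dirichlet g_support', ← energy_eq_energy_dirichlet g_support']
  refine (mul_le_mul_of_nonneg_right ?_ (sqnorm_nonneg g)).trans (lambda1_mul_sqnorm_le g_support)
  refine (h.1 z r _ ν (Finset.sum_pos (fun x _ => Γ.wV_pos x) hS.map) mass_le).trans
    (h.2 z r _ hS.map fun x hx => ?_)
  obtain ⟨y, hy, rfl⟩ := Finset.mem_map.1 hx
  exact hf y (Finset.mem_filter.1 hy).2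

end FaberKrahn

section GaussianBound

variable {Γ} {ε D a α : ℝ} {F : V → ℝ → ℝ} {k : ℕ} (hlazy : Γ.UniformlyLazy ε)
  (hF : ∀ z : V, ∀ r : ℝ, 0 < r → 0 < F z r) (ha : 0 < a) (hα : 0 < α)
  (hfk : Γ.IsRelFK fun z r ν => a / r ^ 2 * (F z r / ν) ^ α) (hDε : 72 ≤ D * ε) (hk : 0 < k)
include hlazy hF ha hα hfk hDε hk

theorem sum_killedPow_le {Ω : Finset V} {x : V} (hx : x ∈ Ω) :
    ∑ w ∈ Ω, (Γ.killedPow Ω k x w / Γ.wV w) ^ 2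
        * Real.exp (max 1 (Γ.G.dist x w : ℝ) ^ 2 / (D * k)) * Γ.wV w
      ≤ KilledNetwork.meanValueConst ε a α * Real.exp (4 / D) / F x (Real.sqrt (2 * k)) := by
  classical
  have bound := (hlazy.isLazy_dirichlet Ω).gaussianEnergy_le (x := ⟨x, hx⟩)
    (isDistanceLike_dirichlet Ω x) hDε (by simp) ha hα (hF x _ (by positivity)) hk
    (hfk.isFaberKrahn_dirichlet Ω x _)
  simp only [KilledNetwork.gaussianEnergy, kernel_pow_dirichlet] at bound
  rwa [← Finset.sum_coe_sort]

theorem sum_heatKernel_le (x : V) (A : Finset V) :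
    ∑ w ∈ A, Γ.heatKernel k x w ^ 2
        * Real.exp (max 1 (Γ.G.dist x w : ℝ) ^ 2 / (D * k)) * Γ.wV w
      ≤ KilledNetwork.meanValueConst ε a α * Real.exp (4 / D) / F x (Real.sqrt (2 * k)) := by
  classical
  let weight (w : V) : ℝ := Real.exp (max 1 (Γ.G.dist x w : ℝ) ^ 2 / (D * k))
  have limit : Tendsto
      (fun Ω => ∑ w ∈ A, (Γ.killedPow Ω k x w / Γ.wV w) ^ 2 * weight w * Γ.wV w) atTop
      (𝓝 (∑ w ∈ A, Γ.heatKernel k x w ^ 2 * weight w * Γ.wV w)) :=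
    tendsto_finsetSum A fun w _ =>
      ((((tendsto_killedPow k x w).div_const _).pow 2).mul_const _).mul_const _
  refine le_of_tendsto limit ?_
  filter_upwards [eventually_ge_atTop (insert x A)] with Ω hΩ
  refine le_trans ?_ (sum_killedPow_le hlazy hF ha hα hfk hDε hk (hΩ (Finset.mem_insert_self x A)))
  exact Finset.sum_le_sum_of_subset_of_nonneg ((Finset.subset_insert x A).trans hΩ)
    fun w _ _ => mul_nonneg (mul_nonneg (sq_nonneg _) (Real.exp_pos _).le) (Γ.wV_pos w).le

end GaussianBound

end WeightedGraph

theorem gaussian_weighted_l2_bound_general {V : Type*} (Γ : WeightedGraph V) {Ce : ℝ}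
    (hlazy : Γ.UniformlyLazy Ce) {F : V → ℝ → ℝ} (hF : ∀ z : V, ∀ r : ℝ, 0 < r → 0 < F z r)
    {a α : ℝ} (ha : 0 < a) (hα : 0 < α)
    (hfk : Γ.IsRelFK (fun z r ν => (a / r ^ 2) * (F z r / ν) ^ α))
    {D : ℝ} (hD : 72 / Ce ≤ D) (x : V) {k : ℕ} (hk : 1 ≤ k) :
    (Summable fun w => Γ.heatKernel k x w ^ 2 *
        Real.exp ((max 1 (Γ.G.dist x w : ℝ)) ^ 2 / (D * (k : ℝ))) * Γ.wV w) ∧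
      (∑' w, Γ.heatKernel k x w ^ 2 *
          Real.exp ((max 1 (Γ.G.dist x w : ℝ)) ^ 2 / (D * (k : ℝ))) * Γ.wV w)
        ≤ KilledNetwork.meanValueConst Ce a α * Real.exp (4 / D)
          / F x (Real.sqrt (2 * (k : ℝ))) := by
  have summand_nonneg := fun w => mul_nonneg (mul_nonneg (sq_nonneg (Γ.heatKernel k x w))
    (Real.exp_pos ((max 1 (Γ.G.dist x w : ℝ)) ^ 2 / (D * (k : ℝ)))).le) (Γ.wV_pos w).le
  have partial_sum_le := WeightedGraph.sum_heatKernel_le hlazy hF ha hα hfk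
    ((div_le_iff₀ hlazy.1.1).1 hD) hk x
  exact ⟨summable_of_sum_le summand_nonneg partial_sum_le,
    Real.tsum_le_of_sum_le summand_nonneg partial_sum_le⟩

/-- **Claim (Gaussian-weighted L² bound for the heat kernel).**
Let `(Γ, wV, wE)` be a weighted graph with controlled and uniformly lazy weights
admitting a relative Faber-Krahn function `Λ(B(z,r),ν) = (a/r²)(F(z,r)/ν)^α`.  With
`E_D(k,x) = ∑_w p(k,x,w)² exp(ρ(x,w)²/(Dk)) π(w)` and `ρ(x,w) = max{1, d(x,w)}`, there
is `D₀ > 0` such that for every `D ≥ D₀` there is a constant `C(D)` with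
`E_D(k,x) ≤ C(D)/F(x,√(2k))` for all `x` and all integers `k ≥ 1`. -/
theorem gaussian_weighted_l2_bound {V : Type*} [Countable V]
    (Γ : WeightedGraph V) (Cc Ce : ℝ)
    (hctrl : Γ.Controlled Cc) (hlazy : Γ.UniformlyLazy Ce)
    (F : V → ℝ → ℝ) (hF : ∀ z : V, ∀ r : ℝ, 0 < r → 0 < F z r)
    (a α : ℝ) (ha : 0 < a) (hα : 0 < α)
    (hfk : Γ.IsRelFK (fun z r ν => (a / r ^ 2) * (F z r / ν) ^ α)) :
    ∃ D₀ : ℝ, 0 < D₀ ∧ ∀ D : ℝ, D₀ ≤ D → ∃ C : ℝ, 0 < C ∧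
      ∀ x : V, ∀ k : ℕ, 1 ≤ k →
        (∑' w, Γ.heatKernel k x w ^ 2 *
            Real.exp ((max 1 (Γ.G.dist x w : ℝ)) ^ 2 / (D * (k : ℝ))) * Γ.wV w)
          ≤ C / F x (Real.sqrt (2 * (k : ℝ))) := by
  have hCe : 0 < Ce := hlazy.1.1
  refine ⟨72 / Ce, by positivity, fun D hD =>
    ⟨KilledNetwork.meanValueConst Ce a α * Real.exp (4 / D), ?_, fun x k hk => ?_⟩⟩
  · exact mul_pos (KilledNetwork.meanValueConst_pos hCe ha) (Real.exp_pos _)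
  · exact (gaussian_weighted_l2_bound_general Γ hlazy hF ha hα hfk hD x hk).2
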